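/- arXiv:1604.00284 — 3 statements merged into one kernel-verified Lean document; each statement's English description precedes it below -/
import Mathlib

section
/- Let ω ≥ 1 be an integer and δ ∈ (0,1/8) be fixed, and let η > 0. The double series Ω₂(s) = (2 sin(πs)/π) · Σ_{k≥1} Σ_{j≥0} ((s)_j/(j!·4^j)) · (kω)^{-(2s+2j+1)} · ∫_{k^{δ-1}/ω}^{∞} u^{-2s-2j} · A₂(u) du converges absolutely and locally uniformly on the strip {s ∈ ℂ : 1 < Re(s) < 2}, and its sum extends holomorphically to a neighborhood of s = 0; moreover, for fixed ω and δ, as η → 0⁺ one has Ω₂(0) → -1/(12ω) and Ω₂'(0) - (-γ/(6ω) + 1/(12ω) + (log 2)/(6ω) + (log ω)/(6ω) - (log η)/(6ω)) → 0. -/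
open MeasureTheory Filter

/-- The Pochhammer symbol `(s)_j = s(s+1)⋯(s+j-1)`. -/
noncomputable def pochSym (s : ℂ) (j : ℕ) : ℂ := ∏ i ∈ Finset.range j, (s + i)

/-- `A₂(u) = -(cosh(η)·sinh(η)⁴/8) · u³·(1 + u²sinh(η)²)^{-5/2}`. -/
noncomputable def coneA2 (η u : ℝ) : ℝ :=
  -(Real.cosh η * Real.sinh η ^ 4 / 8) *
    (u ^ 3 * (1 + u ^ 2 * Real.sinh η ^ 2) ^ (-(5 : ℝ) / 2))

/-- The `(k,j)`-term of the double series `Ω₂(s)`: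
`(2 sin(πs)/π) · ((s)_j/(j!·4^j)) · (kω)^{-(2s+2j+1)} · ∫_{k^{δ-1}/ω}^∞ u^{-2s-2j}·A₂(u) du`. -/
noncomputable def Omega2Term (ω : ℕ) (η δ : ℝ) (k j : ℕ) (s : ℂ) : ℂ :=
  (2 * Complex.sin ((Real.pi : ℂ) * s) / (Real.pi : ℂ)) *
    (pochSym s j / ((Nat.factorial j : ℂ) * 4 ^ j)) *
    (((k : ℝ) * (ω : ℝ) : ℝ) : ℂ) ^ (-(2 * s + 2 * (j : ℂ) + 1)) *
    ∫ u in Set.Ioi ((k : ℝ) ^ (δ - 1) / ω),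
      (u : ℂ) ^ (-(2 * s) - 2 * (j : ℂ)) * ((coneA2 η u : ℝ) : ℂ)

section Proof

open Set Topology Asymptotics

lemma mellin_one_add_rpow {w : ℂ} {b : ℝ} :
    mellin (fun y : ℝ => (((1 + y) ^ (-b) : ℝ) : ℂ)) w = Complex.betaIntegral w (b - w) := by
  unfold mellin Complex.betaIntegral
  rw [intervalIntegral.integral_of_le zero_le_one, integral_Ioc_eq_integral_Ioo]
  have himg : (fun y : ℝ => y / (1 + y)) '' Ioi 0 = Ioo 0 1 := by
    ext x; constructor
    · rintro ⟨y, hy, rfl⟩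
      have hy : 0 < y := hy
      refine ⟨by positivity, ?_⟩
      show y / (1+y) < 1
      rw [div_lt_one (by positivity)]; linarith
    · rintro ⟨h0, h1⟩
      have : 0 < 1 - x := by linarith
      refine ⟨x / (1 - x), div_pos h0 this, ?_⟩
      show x / (1 - x) / (1 + x / (1 - x)) = x
      field_simp; ring
  rw [← himg]
  have hder : ∀ y ∈ Ioi (0:ℝ), HasDerivWithinAt (fun y : ℝ => y / (1 + y)) (1 / (1+y)^2) (Ioi 0) y := by
    intro y hy
    have hy : 0 < y := hy
    have h := (hasDerivAt_id y).div ((hasDerivAt_id y).const_add 1) (by simp; positivity)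
    refine (h.congr_deriv ?_).hasDerivWithinAt
    simp
  have hinj : InjOn (fun y : ℝ => y / (1 + y)) (Ioi 0) := by
    intro x hx y hy h
    have hx : 0 < x := hx
    have hy : 0 < y := hy
    simp only at h
    field_simp at h
    linarith
  rw [integral_image_eq_integral_abs_deriv_smul measurableSet_Ioi hder hinj]
  refine setIntegral_congr_fun measurableSet_Ioi fun y hy => ?_
  have hy : 0 < y := hy
  have h1 : 0 < 1 + y := by positivity
  have h1c : ((1 + y : ℝ) : ℂ) ≠ 0 := by exact_mod_cast h1.ne'
  have e2 : (1 : ℂ) - ((y / (1 + y) : ℝ) : ℂ) = (((1 + y)⁻¹ : ℝ) : ℂ) := by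
    have : (1:ℝ) - y / (1+y) = (1+y)⁻¹ := by field_simp; ring
    rw [← this]; push_cast; ring
  simp only [smul_eq_mul]
  rw [e2, abs_of_pos (by positivity), div_eq_mul_inv y, Complex.ofReal_mul,
    Complex.mul_cpow_ofReal_nonneg hy.le (by positivity)]
  have e3 : ∀ z : ℂ, (((1 + y)⁻¹ : ℝ) : ℂ) ^ z = ((1 + y : ℝ) : ℂ) ^ (-z) := by
    intro z
    rw [Complex.ofReal_inv, Complex.inv_cpow, Complex.cpow_neg]
    rw [Complex.arg_ofReal_of_nonneg h1.le]; exact Real.pi_pos.ne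
  rw [e3, e3, Complex.ofReal_cpow h1.le]
  have e4 : ((1 / (1 + y) ^ 2 : ℝ)) • ((y:ℂ) ^ (w - 1) * ((1 + y : ℝ) : ℂ) ^ (-(w - 1)) *
      ((1 + y : ℝ) : ℂ) ^ (-(↑b - w - 1))) = (y:ℂ) ^ (w - 1) * (((1 + y : ℝ) : ℂ) ^ (-(w - 1)) *
      ((1 + y : ℝ) : ℂ) ^ (-(↑b - w - 1)) * ((1 + y : ℝ) : ℂ) ^ (-2 : ℂ)) := by
    rw [Complex.real_smul]
    have : ((1 + y : ℝ) : ℂ) ^ (-2 : ℂ) = ((1 / (1 + y) ^ 2 : ℝ) : ℂ) := by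
      rw [Complex.cpow_neg]; simp
    rw [this]; ring
  rw [e4, ← Complex.cpow_add _ _ h1c, ← Complex.cpow_add _ _ h1c]
  congr 2
  push_cast; ring

/-- Closed form for the full Mellin integral of `A₂`. -/
noncomputable def Mt (η : ℝ) (τ : ℂ) : ℂ :=
  -((Real.cosh η * Real.sinh η ^ 4 / 8 : ℝ) : ℂ) / 2 * ((Real.sinh η : ℝ) : ℂ) ^ (2 * τ - 4) *
    (Complex.Gamma (2 - τ) * Complex.Gamma (1 / 2 + τ) / Complex.Gamma (5 / 2))

lemma mellin_coneA2 {η : ℝ} (hη : 0 < η) {τ : ℂ} (h0 : -(1/2) < τ.re) (h1 : τ.re < 2) :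
    mellin (fun u => (coneA2 η u : ℂ)) (1 - 2 * τ) = Mt η τ := by
  have hc : 0 < Real.sinh η := Real.sinh_pos_iff.mpr hη
  set c := Real.sinh η with hcdef
  set C := Real.cosh η * c ^ 4 / 8 with hC
  set g : ℝ → ℂ := fun y : ℝ => (((1 + y) ^ (-(5/2) : ℝ) : ℝ) : ℂ) with hg
  set g2 : ℝ → ℂ := fun y => g (y ^ (2:ℝ)) with hg2
  set g3 : ℝ → ℂ := fun y => g2 (c * y) with hg3
  have e1 : mellin g (2 - τ) = Complex.betaIntegral (2 - τ) (1/2 + τ) := by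
    rw [hg, mellin_one_add_rpow]
    congr 1; push_cast; ring
  have e2 : mellin g2 (4 - 2 * τ) = (1/2 : ℂ) * mellin g (2 - τ) := by
    rw [hg2, mellin_comp_rpow]
    rw [Complex.real_smul]
    congr 1
    · norm_num
    · congr 1; push_cast; ring
  have e3 : mellin g3 (4 - 2 * τ) = (c:ℂ) ^ (2 * τ - 4) * mellin g2 (4 - 2 * τ) := by
    rw [hg3, mellin_comp_mul_left _ _ hc, smul_eq_mul]
    congr 2; ring
  have e4 : mellin (fun u => (coneA2 η u : ℂ)) (1 - 2 * τ) = (-(C:ℂ)) * mellin g3 (4 - 2 * τ) := by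
    unfold mellin
    rw [← integral_const_mul]
    refine setIntegral_congr_fun measurableSet_Ioi fun u hu => ?_
    have hu : 0 < u := hu
    have huc : (u : ℂ) ≠ 0 := by exact_mod_cast hu.ne'
    have : (4 - 2 * τ - 1 : ℂ) = (1 - 2 * τ - 1) + 3 := by ring
    simp only [smul_eq_mul]
    rw [this, Complex.cpow_add _ _ huc]
    have e5 : (u:ℂ) ^ (3:ℂ) = (u:ℂ)^3 := by
      rw [show (3:ℂ) = ((3:ℕ):ℂ) by norm_num, Complex.cpow_natCast]
    have e6 : (coneA2 η u : ℂ) = -(C:ℂ) * ((u:ℂ)^3 * g3 u) := by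
      simp only [hg3, hg2, hg, coneA2]
      rw [← hcdef, ← hC]
      have : (c * u)^(2:ℝ) = u^2 * c^2 := by
        rw [show (2:ℝ) = ((2:ℕ):ℝ) by norm_num, Real.rpow_natCast]; ring
      rw [this, show (-(5:ℝ)/2) = -(5/2) by norm_num]
      push_cast; ring
    rw [e5, e6]; ring
  rw [e4, e3, e2, e1, Complex.betaIntegral_eq_Gamma_mul_div _ _ (by simp; linarith) (by simp; linarith)]
  unfold Mt
  rw [show (2 - τ + (1/2 + τ) : ℂ) = 5/2 by ring]
  simp only [← hcdef, ← hC]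
  ring

lemma coneA2_continuous (η : ℝ) : Continuous (coneA2 η) := by
  unfold coneA2
  refine continuous_const.mul ((continuous_pow 3).mul ?_)
  refine Continuous.rpow_const (by fun_prop) fun x => Or.inl ?_
  positivity

lemma coneA2C_continuous (η : ℝ) : Continuous (fun u => (coneA2 η u : ℂ)) :=
  Complex.continuous_ofReal.comp (coneA2_continuous η)

lemma coneA2_norm {η : ℝ} {u : ℝ} (hu : 0 ≤ u) :
    ‖coneA2 η u‖ = (Real.cosh η * Real.sinh η ^ 4 / 8) *
    (u ^ 3 * (1 + u ^ 2 * Real.sinh η ^ 2) ^ (-(5 : ℝ) / 2)) := by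
  unfold coneA2
  have := Real.cosh_pos η
  rw [neg_mul, norm_neg, Real.norm_of_nonneg]
  have h4 : 0 ≤ Real.sinh η ^ 4 := by positivity
  positivity

lemma coneA2_bound_zero (η : ℝ) {u : ℝ} (hu : 0 ≤ u) :
    ‖coneA2 η u‖ ≤ (Real.cosh η * Real.sinh η ^ 4 / 8) * u ^ 3 := by
  rw [coneA2_norm hu]
  have := Real.cosh_pos η
  have h1 : (1 + u ^ 2 * Real.sinh η ^ 2) ^ (-(5 : ℝ) / 2) ≤ 1 :=
    Real.rpow_le_one_of_one_le_of_nonpos (by nlinarith [mul_nonneg (sq_nonneg u) (sq_nonneg (Real.sinh η))]) (by norm_num)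
  have h4 : 0 ≤ Real.sinh η ^ 4 := by positivity
  have h5 : u ^ 3 * (1 + u ^ 2 * Real.sinh η ^ 2) ^ (-(5 : ℝ) / 2) ≤ u ^ 3 * 1 := by gcongr
  rw [mul_one] at h5
  gcongr

lemma coneA2_isBigO_zero (η : ℝ) :
    (fun u => (coneA2 η u : ℂ)) =O[𝓝[>] 0] (fun x : ℝ => x ^ (-(-3 : ℝ))) := by
  refine IsBigO.of_bound (Real.cosh η * Real.sinh η ^ 4 / 8) ?_
  filter_upwards [self_mem_nhdsWithin] with u hu
  have hu : 0 < u := hu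
  rw [Complex.norm_real]
  refine (coneA2_bound_zero η hu.le).trans_eq ?_
  rw [neg_neg, show (3:ℝ) = ((3:ℕ):ℝ) by norm_num, Real.rpow_natCast, Real.norm_of_nonneg (by positivity)]

lemma coneA2_isBigO_top {η : ℝ} (hη : 0 < η) :
    (fun u => (coneA2 η u : ℂ)) =O[atTop] (fun x : ℝ => x ^ (-(2 : ℝ))) := by
  have hc : 0 < Real.sinh η := Real.sinh_pos_iff.mpr hη
  refine IsBigO.of_bound ((Real.cosh η * Real.sinh η ^ 4 / 8) * (Real.sinh η) ^ (-(5:ℝ))) ?_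
  filter_upwards [eventually_gt_atTop 0] with u hu
  rw [Complex.norm_real, coneA2_norm hu.le, mul_assoc]
  have := Real.cosh_pos η
  refine mul_le_mul_of_nonneg_left ?_ (by positivity)
  have h1 : (1 + u ^ 2 * Real.sinh η ^ 2) ^ (-(5 : ℝ) / 2) ≤ ((u * Real.sinh η)^(2:ℝ)) ^ (-(5 : ℝ) / 2) := by
    refine Real.rpow_le_rpow_of_nonpos (by positivity) ?_ (by norm_num)
    rw [show (2:ℝ) = ((2:ℕ):ℝ) by norm_num, Real.rpow_natCast]; nlinarith
  rw [← Real.rpow_mul (by positivity), Real.mul_rpow hu.le hc.le] at h1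
  rw [Real.norm_of_nonneg (by positivity)]
  calc _ ≤ u^3 * (u ^ (2 * (-5 / 2) : ℝ) * Real.sinh η ^ (2 * (-5 / 2) : ℝ)) := by gcongr
    _ = _ := by
      rw [← Real.rpow_natCast u 3, ← mul_assoc, ← Real.rpow_add hu, mul_comm]
      norm_num

lemma coneA2_mellinConvergent {η : ℝ} (hη : 0 < η) {s : ℂ} (h0 : -3 < s.re) (h1 : s.re < 2) :
    MellinConvergent (fun u => (coneA2 η u : ℂ)) s :=
  mellinConvergent_of_isBigO_rpow ((coneA2C_continuous η).locallyIntegrable.locallyIntegrableOn _)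
    (coneA2_isBigO_top hη) h1 (coneA2_isBigO_zero η) h0

lemma mellin_indicator (f : ℝ → ℂ) (s : ℂ) {A : Set ℝ} (hA : MeasurableSet A) (hA0 : A ⊆ Ioi 0) :
    mellin (A.indicator f) s = ∫ u in A, (u : ℂ) ^ (s - 1) * f u := by
  unfold mellin
  have : ∀ t : ℝ, (t : ℂ) ^ (s - 1) • A.indicator f t = A.indicator (fun u => (u : ℂ) ^ (s - 1) * f u) t := by
    intro t; by_cases h : t ∈ A <;> simp [h]
  simp_rw [this]
  rw [setIntegral_indicator hA, inter_eq_right.mpr hA0]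

/-- the lower limit of integration -/
noncomputable def cK (ω : ℕ) (δ : ℝ) (k : ℕ) : ℝ := (k : ℝ) ^ (δ - 1) / ω

/-- the `k`-th summand of `D` -/
noncomputable def dT (ω : ℕ) (η δ : ℝ) (k : ℕ) (τ : ℂ) : ℂ :=
  (((k : ℝ) * (ω : ℝ) : ℝ) : ℂ) ^ (-(2 * τ + 1)) *
    ∫ u in Ioi (cK ω δ k), (u : ℂ) ^ (-(2 * τ)) * ((coneA2 η u : ℝ) : ℂ)

lemma cK_pos {ω : ℕ} (hω : 1 ≤ ω) (δ : ℝ) {k : ℕ} (hk : 1 ≤ k) : 0 < cK ω δ k := by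
  unfold cK
  have h1 : (0:ℝ) < ω := by exact_mod_cast hω
  have h2 : (0:ℝ) < k := by exact_mod_cast hk
  positivity

lemma cK_le_one {ω : ℕ} (hω : 1 ≤ ω) {δ : ℝ} (hδ : δ < 1) {k : ℕ} (hk : 1 ≤ k) : cK ω δ k ≤ 1 := by
  unfold cK
  have h1 : (1:ℝ) ≤ ω := by exact_mod_cast hω
  have h2 : (1:ℝ) ≤ k := by exact_mod_cast hk
  rw [div_le_one (by positivity)]
  exact (Real.rpow_le_one_of_one_le_of_nonpos h2 (by linarith)).trans h1

lemma one_le_kwu {ω : ℕ} (hω : 1 ≤ ω) {δ : ℝ} (hδ : 0 < δ) {k : ℕ} (hk : 1 ≤ k) {u : ℝ}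
    (hu : cK ω δ k < u) : 1 ≤ (k * ω : ℝ) * u := by
  have h1 : (1:ℝ) ≤ ω := by exact_mod_cast hω
  have h2 : (1:ℝ) ≤ k := by exact_mod_cast hk
  have h3 : (k * ω : ℝ) * cK ω δ k = (k:ℝ) ^ δ := by
    unfold cK
    rw [Real.rpow_sub_one (by positivity)]
    field_simp
  have h4 : 1 ≤ (k:ℝ) ^ δ := Real.one_le_rpow h2 hδ.le
  rw [← h3] at h4
  refine h4.trans ?_
  gcongr

lemma dT_eq_mellin (ω : ℕ) (hω : 1 ≤ ω) (η δ : ℝ) {k : ℕ} (hk : 1 ≤ k) (τ : ℂ) :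
    dT ω η δ k τ = (((k : ℝ) * (ω : ℝ) : ℝ) : ℂ) ^ (-(2 * τ + 1)) *
      mellin ((Ioi (cK ω δ k)).indicator (fun u => (coneA2 η u : ℂ))) (1 - 2 * τ) := by
  rw [mellin_indicator _ _ measurableSet_Ioi (Ioi_subset_Ioi (cK_pos hω δ hk).le)]
  unfold dT
  congr 3
  ext u; congr 2; ring

lemma dT_differentiableAt {ω : ℕ} (hω : 1 ≤ ω) {η δ : ℝ} (hη : 0 < η) {k : ℕ} (hk : 1 ≤ k) {τ : ℂ}
    (hτ : 0 < τ.re) : DifferentiableAt ℂ (dT ω η δ k) τ := by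
  have h1 : (0:ℝ) < ω := by exact_mod_cast hω
  have h2 : (0:ℝ) < k := by exact_mod_cast hk
  rw [funext (fun τ => dT_eq_mellin ω hω η δ hk τ)]
  have hne : (((k : ℝ) * (ω : ℝ) : ℝ) : ℂ) ≠ 0 := by
    exact_mod_cast (mul_pos h2 h1).ne'
  have hmd : DifferentiableAt ℂ
      (mellin ((Ioi (cK ω δ k)).indicator (fun u => (coneA2 η u : ℂ)))) (1 - 2 * τ) := by
    refine mellin_differentiableAt_of_isBigO_rpow (a := 2) (b := (1 - 2 * τ).re - 1) ?_ ?_ ?_ ?_ (by linarith)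
    · exact ((coneA2C_continuous η).locallyIntegrable.indicator measurableSet_Ioi).locallyIntegrableOn _
    · refine (coneA2_isBigO_top hη).congr' ?_ EventuallyEq.rfl
      filter_upwards [eventually_gt_atTop (cK ω δ k)] with u hu
      rw [indicator_of_mem (show u ∈ Ioi (cK ω δ k) from hu)]
    · simp; linarith
    · refine (isBigO_zero _ _).congr' ?_ EventuallyEq.rfl
      filter_upwards [mem_nhdsWithin_of_mem_nhds (Iio_mem_nhds (cK_pos hω δ hk))] with u hu
      rw [indicator_of_notMem]
      simpa using (show u < _ from hu).le
  refine DifferentiableAt.mul ?_ ?_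
  · refine DifferentiableAt.const_cpow (by fun_prop) (Or.inl hne)
  · exact hmd.comp τ (f := fun τ : ℂ => 1 - 2 * τ) (by fun_prop)

lemma dT_bound {ω : ℕ} (hω : 1 ≤ ω) {η δ : ℝ} (hη : 0 < η) (hδ : 0 < δ) {ε : ℝ} (hε : 0 < ε) (hε1 : ε ≤ 1) :
    ∃ B : ℝ, 0 ≤ B ∧ ∀ k : ℕ, 1 ≤ k → ∀ τ : ℂ, ε ≤ τ.re →
      ‖dT ω η δ k τ‖ ≤ B * (k:ℝ) ^ (-(1 + 2 * ε)) := by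
  have hconv : IntegrableOn (fun u : ℝ => u ^ (-(2 * ε)) * ‖coneA2 η u‖) (Ioi 0) := by
    have h := (coneA2_mellinConvergent hη (s := ((1 - 2 * ε : ℝ) : ℂ)) (by rw [Complex.ofReal_re]; linarith)
      (by rw [Complex.ofReal_re]; linarith)).norm
    refine IntegrableOn.congr_fun h (fun u hu => ?_) measurableSet_Ioi
    have hu : 0 < u := hu
    simp only [smul_eq_mul, norm_mul, Complex.norm_real]
    rw [Complex.norm_cpow_eq_rpow_re_of_pos hu]
    congr 2; simp
  refine ⟨∫ u in Ioi 0, u ^ (-(2 * ε)) * ‖coneA2 η u‖, ?_, ?_⟩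
  · refine setIntegral_nonneg measurableSet_Ioi fun u hu => ?_
    have hu : 0 < u := hu
    positivity
  intro k hk τ hτ
  have h1 : (1:ℝ) ≤ ω := by exact_mod_cast hω
  have h2 : (1:ℝ) ≤ k := by exact_mod_cast hk
  have hkw : 0 < (k:ℝ) * ω := by positivity
  have ha := cK_pos hω δ hk
  unfold dT
  rw [← integral_const_mul]
  have hsub : Ioi (cK ω δ k) ⊆ Ioi 0 := Ioi_subset_Ioi ha.le
  have step : ∀ u ∈ Ioi (cK ω δ k), ‖(((k : ℝ) * (ω : ℝ) : ℝ) : ℂ) ^ (-(2 * τ + 1)) *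
      ((u : ℂ) ^ (-(2 * τ)) * ((coneA2 η u : ℝ) : ℂ))‖ ≤
      (k:ℝ) ^ (-(1 + 2 * ε)) * (u ^ (-(2 * ε)) * ‖coneA2 η u‖) := by
    intro u hu
    have hu0 : 0 < u := hsub hu
    have hone := one_le_kwu hω hδ hk hu
    rw [norm_mul, norm_mul, Complex.norm_real, Complex.norm_cpow_eq_rpow_re_of_pos hkw,
      Complex.norm_cpow_eq_rpow_re_of_pos hu0, ← mul_assoc, ← mul_assoc]
    refine mul_le_mul_of_nonneg_right ?_ (norm_nonneg _)
    have e1 : (-(2 * τ + 1)).re = -(2 * τ.re) + (-1) := by simp; ring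
    have e2 : (-(2 * τ)).re = -(2 * τ.re) := by simp
    rw [e1, e2, Real.rpow_add hkw, mul_right_comm, ← Real.mul_rpow hkw.le hu0.le]
    have h5 : ((k:ℝ) * ω * u) ^ (-(2 * τ.re)) ≤ ((k:ℝ) * ω * u) ^ (-(2 * ε)) :=
      Real.rpow_le_rpow_of_exponent_le hone (by linarith)
    calc _ ≤ ((k:ℝ) * ω * u) ^ (-(2 * ε)) * ((k:ℝ) * ω) ^ (-1:ℝ) := by gcongr
      _ = ((k:ℝ) * ω) ^ (-(1 + 2 * ε)) * u ^ (-(2 * ε)) := by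
        rw [Real.mul_rpow hkw.le hu0.le, mul_right_comm, ← Real.rpow_add hkw]
        congr 2; ring
      _ ≤ _ := by
        refine mul_le_mul_of_nonneg_right ?_ (by positivity)
        refine Real.rpow_le_rpow_of_nonpos (by positivity) ?_ (by linarith)
        exact le_mul_of_one_le_right (by positivity) h1
  calc _ ≤ ∫ u in Ioi (cK ω δ k), (k:ℝ) ^ (-(1 + 2 * ε)) * (u ^ (-(2 * ε)) * ‖coneA2 η u‖) := by
        refine norm_integral_le_of_norm_le ((hconv.mono_set hsub).const_mul _) ?_
        exact (ae_restrict_mem measurableSet_Ioi).mono step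
    _ = (k:ℝ) ^ (-(1 + 2 * ε)) * ∫ u in Ioi (cK ω δ k), (u ^ (-(2 * ε)) * ‖coneA2 η u‖) := by
        rw [integral_const_mul]
    _ ≤ (k:ℝ) ^ (-(1 + 2 * ε)) * ∫ u in Ioi 0, (u ^ (-(2 * ε)) * ‖coneA2 η u‖) := by
        refine mul_le_mul_of_nonneg_left ?_ (by positivity)
        refine setIntegral_mono_set hconv ?_ hsub.eventuallyLE
        refine (ae_restrict_mem measurableSet_Ioi).mono fun u hu => ?_
        have hu : 0 < u := hu
        show (0:ℝ) ≤ _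
        positivity
    _ = _ := mul_comm _ _

/-- the Dirichlet-type series -/
noncomputable def Dser (ω : ℕ) (η δ : ℝ) (τ : ℂ) : ℂ := ∑' k : ℕ, dT ω η δ (k + 1) τ

lemma summable_k (ε : ℝ) (hε : 0 < ε) : Summable (fun k : ℕ => ((k + 1 : ℕ) : ℝ) ^ (-(1 + 2 * ε))) :=
  (summable_nat_add_iff 1).mpr (Real.summable_nat_rpow.mpr (by linarith))

lemma Dser_differentiableAt {ω : ℕ} (hω : 1 ≤ ω) {η δ : ℝ} (hη : 0 < η) (hδ : 0 < δ) {τ : ℂ}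
    (hτ : 0 < τ.re) : DifferentiableAt ℂ (Dser ω η δ) τ := by
  obtain ⟨ε, h0, h1, h2⟩ : ∃ ε, 0 < ε ∧ ε ≤ 1 ∧ ε < τ.re :=
    ⟨min 1 (τ.re / 2), by positivity, min_le_left _ _, (min_le_right _ _).trans_lt (by linarith)⟩
  obtain ⟨B, hB, hb⟩ := dT_bound hω hη hδ h0 h1
  have hopen : IsOpen {s : ℂ | ε < s.re} := isOpen_lt continuous_const Complex.continuous_re
  have := Complex.differentiableOn_tsum_of_summable_norm (F := fun k : ℕ => dT ω η δ (k+1))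
    (u := fun k : ℕ => B * ((k + 1 : ℕ) : ℝ) ^ (-(1 + 2 * ε)))
    ((summable_k ε h0).mul_left B) (fun k s hs => (dT_differentiableAt hω hη (by omega)
      (h0.trans hs)).differentiableWithinAt) hopen (fun k s hs => hb (k+1) (by omega) s (le_of_lt hs))
  exact this.differentiableAt (hopen.mem_nhds h2)

lemma Dser_bound {ω : ℕ} (hω : 1 ≤ ω) {η δ : ℝ} (hη : 0 < η) (hδ : 0 < δ) :
    ∃ B : ℝ, 0 ≤ B ∧ ∀ τ : ℂ, 1/2 ≤ τ.re → ‖Dser ω η δ τ‖ ≤ B := by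
  obtain ⟨B, hB, hb⟩ := dT_bound hω hη hδ (ε := 1/2) (by norm_num) (by norm_num)
  have hs := (summable_k (1/2) (by norm_num)).mul_left B
  refine ⟨_, ?_, fun τ hτ => tsum_of_norm_bounded hs.hasSum (fun k => hb (k+1) (by omega) τ hτ)⟩
  exact tsum_nonneg fun k => by positivity

noncomputable def hA (η x : ℝ) : ℝ :=
  -(Real.cosh η * Real.sinh η ^ 4 / 8) * (1 + x * Real.sinh η ^ 2) ^ (-(5 : ℝ) / 2)

/-- Taylor coefficients of `hA` at `0`. -/
noncomputable def bet (η : ℝ) (m : ℕ) : ℝ :=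
  ((Nat.factorial m : ℕ) : ℝ)⁻¹ * iteratedDerivWithin m (hA η) (Icc 0 1) 0

/-- Taylor remainder of `A₂`. -/
noncomputable def fM (η : ℝ) (M : ℕ) (u : ℝ) : ℝ :=
  coneA2 η u - ∑ m ∈ Finset.range M, bet η m * u ^ (3 + 2 * m)

lemma fM_zero (η : ℝ) : fM η 0 = coneA2 η := by ext u; simp [fM]

lemma fM_succ (η : ℝ) (M : ℕ) (u : ℝ) : fM η M u = bet η M * u ^ (3 + 2 * M) + fM η (M + 1) u := by
  simp [fM, Finset.sum_range_succ]; ring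

lemma fM_continuous (η : ℝ) (M : ℕ) : Continuous (fM η M) := by
  unfold fM
  exact (coneA2_continuous η).sub (continuous_finsetSum _ fun m _ => by fun_prop)

lemma hA_contDiffOn (η : ℝ) (n : ℕ) : ContDiffOn ℝ n (hA η) (Icc 0 1) := by
  unfold hA
  refine contDiffOn_const.mul (ContDiffOn.rpow_const_of_ne (by fun_prop) fun x hx => ?_)
  have : 0 ≤ x := hx.1
  positivity

lemma fM_bound (η : ℝ) (M : ℕ) : ∃ K : ℝ, 0 ≤ K ∧ ∀ u, 0 < u → u ≤ 1 → ‖fM η M u‖ ≤ K * u ^ (3 + 2 * M) := by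
  obtain ⟨K, hK⟩ := exists_taylor_mean_remainder_bound (n := M) (zero_le_one (α := ℝ))
    (by exact_mod_cast hA_contDiffOn η (M + 1) : ContDiffOn ℝ ((M : ℕ) + 1) (hA η) (Icc 0 1))
  have hK0 : 0 ≤ K := by
    have := (norm_nonneg _).trans (hK 1 (by simp))
    simpa using this
  refine ⟨K + |bet η M|, by positivity, fun u h0 h1 => ?_⟩
  have hx : u ^ 2 ∈ Icc (0:ℝ) 1 := ⟨by positivity, by nlinarith⟩
  have h := hK _ hx
  rw [taylor_within_apply] at h
  have e1 : fM η (M + 1) u = u ^ 3 * (hA η (u ^ 2) - ∑ k ∈ Finset.range (M + 1),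
      ((Nat.factorial k : ℝ)⁻¹ * (u ^ 2 - 0) ^ k) • iteratedDerivWithin k (hA η) (Icc 0 1) 0) := by
    rw [mul_sub, Finset.mul_sum]
    unfold fM
    congr 1
    · unfold coneA2 hA; ring
    · refine Finset.sum_congr rfl fun m _ => ?_
      simp only [bet, sub_zero, smul_eq_mul]
      rw [← pow_mul, pow_add]; ring
  rw [fM_succ, e1]
  refine (norm_add_le _ _).trans ?_
  rw [norm_mul, norm_mul, norm_pow, norm_pow, Real.norm_of_nonneg h0.le, Real.norm_eq_abs, add_mul, add_comm]
  refine add_le_add ?_ le_rfl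
  calc _ ≤ u ^ 3 * (K * (u ^ 2 - 0) ^ (M + 1)) := by gcongr
    _ = K * u ^ (3 + 2 * M) * u ^ 2 := by rw [sub_zero, ← pow_mul]; ring
    _ ≤ K * u ^ (3 + 2 * M) * 1 := by gcongr; exact hx.2
    _ = _ := mul_one _

/-- the region in which the `M`-th continuation works -/
def UM (M : ℕ) : Set ℂ := {τ | -(M:ℝ) - 1 < τ.re ∧ τ.re < 1}

lemma UM_open (M : ℕ) : IsOpen (UM M) :=
  (isOpen_lt continuous_const Complex.continuous_re).inter (isOpen_lt Complex.continuous_re continuous_const)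

noncomputable def eI (η : ℝ) (M : ℕ) (a : ℝ) (s : ℂ) : ℂ :=
  mellin ((Ioc 0 a).indicator (fun u => (fM η M u : ℂ))) s

lemma fMind_isBigO_top (η : ℝ) (M : ℕ) (a b : ℝ) :
    ((Ioc 0 a).indicator (fun u => (fM η M u : ℂ))) =O[atTop] (fun x : ℝ => x ^ (-b)) := by
  refine (isBigO_zero _ _).congr' ?_ EventuallyEq.rfl
  filter_upwards [eventually_gt_atTop a] with u hu
  rw [indicator_of_notMem]
  simp; intro _; exact hu

lemma fMind_isBigO_zero (η : ℝ) (M : ℕ) (a : ℝ) :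
    ((Ioc 0 a).indicator (fun u => (fM η M u : ℂ))) =O[𝓝[>] 0] (fun x : ℝ => x ^ (-(-(3 + 2 * M : ℝ)))) := by
  obtain ⟨K, hK, hb⟩ := fM_bound η M
  refine IsBigO.of_bound K ?_
  filter_upwards [self_mem_nhdsWithin, mem_nhdsWithin_of_mem_nhds (Iio_mem_nhds one_pos)] with u h0 h1
  have h0 : 0 < u := h0
  have e : u ^ (-(-(3 + 2 * M : ℝ))) = u ^ (3 + 2 * M) := by
    rw [neg_neg, ← Real.rpow_natCast]; push_cast; rfl
  rw [e, Real.norm_of_nonneg (by positivity : 0 ≤ u ^ (3 + 2 * M))]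
  refine (norm_indicator_le_norm_self _ _).trans ?_
  rw [Complex.norm_real]
  exact hb u h0 (le_of_lt h1)

lemma fMind_locInt (η : ℝ) (M : ℕ) (a : ℝ) :
    LocallyIntegrableOn ((Ioc 0 a).indicator (fun u => (fM η M u : ℂ))) (Ioi 0) :=
  ((Complex.continuous_ofReal.comp (fM_continuous η M)).locallyIntegrable.indicator
    measurableSet_Ioc).locallyIntegrableOn _

lemma eI_conv (η : ℝ) (M : ℕ) (a : ℝ) {s : ℂ} (hs : -(3 + 2 * M : ℝ) < s.re) :
    MellinConvergent ((Ioc 0 a).indicator (fun u => (fM η M u : ℂ))) s :=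
  mellinConvergent_of_isBigO_rpow (fMind_locInt η M a) (fMind_isBigO_top η M a (s.re + 1))
    (by linarith) (fMind_isBigO_zero η M a) hs

lemma eI_diff (η : ℝ) (M : ℕ) (a : ℝ) {s : ℂ} (hs : -(3 + 2 * M : ℝ) < s.re) :
    DifferentiableAt ℂ (eI η M a) s :=
  mellin_differentiableAt_of_isBigO_rpow (fMind_locInt η M a) (fMind_isBigO_top η M a (s.re + 1))
    (by linarith) (fMind_isBigO_zero η M a) hs

lemma eI_eq (η : ℝ) (M : ℕ) (a : ℝ) (s : ℂ) :
    eI η M a s = ∫ u in Ioc 0 a, (u:ℂ) ^ (s - 1) * (fM η M u : ℂ) :=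
  mellin_indicator _ _ measurableSet_Ioc (fun _ hx => hx.1)

lemma eI_integrable (η : ℝ) (M : ℕ) (a : ℝ) {s : ℂ} (hs : -(3 + 2 * M : ℝ) < s.re) :
    IntegrableOn (fun u : ℝ => (u:ℂ) ^ (s - 1) * (fM η M u : ℂ)) (Ioc 0 a) := by
  have h := (eI_conv η M a hs)
  unfold MellinConvergent at h
  refine (h.mono_set (fun x hx => hx.1 : Ioc 0 a ⊆ Ioi 0)).congr_fun (fun u hu => ?_) measurableSet_Ioc
  simp [indicator_of_mem hu]

noncomputable def eT (ω : ℕ) (η δ : ℝ) (M k : ℕ) (τ : ℂ) : ℂ :=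
  (((k : ℝ) * (ω : ℝ) : ℝ) : ℂ) ^ (-(2 * τ + 1)) * eI η M (cK ω δ k) (1 - 2 * τ)

lemma eT_differentiableAt {ω : ℕ} (hω : 1 ≤ ω) (η δ : ℝ) (M : ℕ) {k : ℕ} (hk : 1 ≤ k) {τ : ℂ}
    (hτ : τ.re < 1) : DifferentiableAt ℂ (eT ω η δ M k) τ := by
  have h1 : (0:ℝ) < ω := by exact_mod_cast hω
  have h2 : (0:ℝ) < k := by exact_mod_cast hk
  have hne : (((k : ℝ) * (ω : ℝ) : ℝ) : ℂ) ≠ 0 := by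
    exact_mod_cast (mul_pos h2 h1).ne'
  refine DifferentiableAt.mul ?_ ?_
  · refine DifferentiableAt.const_cpow (by fun_prop) (Or.inl hne)
  · refine DifferentiableAt.comp τ (g := eI η M (cK ω δ k)) (f := fun τ : ℂ => 1 - 2 * τ) (eI_diff _ _ _ ?_) (by fun_prop)
    have : (0:ℝ) ≤ M := by positivity
    simp; linarith

lemma eI_norm {η : ℝ} {M : ℕ} {K a : ℝ} (ha : 0 < a) (ha1 : a ≤ 1)
    (hb : ∀ u, 0 < u → u ≤ 1 → ‖fM η M u‖ ≤ K * u ^ (3 + 2 * M)) {τ : ℂ} (hτ : τ.re < 1) :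
    ‖eI η M a (1 - 2 * τ)‖ ≤ K * (a ^ (4 + 2 * M - 2 * τ.re) / (4 + 2 * M - 2 * τ.re)) := by
  have hM : (0:ℝ) ≤ M := by positivity
  rw [eI_eq]
  have hIntv : IntervalIntegrable (fun u : ℝ => u ^ (3 + 2 * M - 2 * τ.re)) volume 0 a :=
    intervalIntegral.intervalIntegrable_rpow' (by linarith)
  rw [intervalIntegrable_iff_integrableOn_Ioc_of_le ha.le] at hIntv
  calc _ ≤ ∫ u in Ioc 0 a, K * u ^ (3 + 2 * M - 2 * τ.re) := by
        refine norm_integral_le_of_norm_le (hIntv.const_mul K) ?_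
        refine (ae_restrict_mem measurableSet_Ioc).mono fun u hu => ?_
        have hu0 : 0 < u := hu.1
        rw [norm_mul, Complex.norm_cpow_eq_rpow_re_of_pos hu0, Complex.norm_real]
        calc _ ≤ u ^ (1 - 2 * τ - 1).re * (K * u ^ (3 + 2 * M)) := by
              gcongr; exact hb u hu0 (hu.2.trans ha1)
          _ = K * (u ^ ((3 + 2 * M : ℕ) : ℝ) * u ^ (1 - 2 * τ - 1).re) := by rw [Real.rpow_natCast]; ring
          _ = _ := by
            rw [← Real.rpow_add hu0]; congr 2; simp; ring
    _ = K * ∫ u in (0:ℝ)..a, u ^ (3 + 2 * M - 2 * τ.re) := by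
        rw [integral_const_mul, intervalIntegral.integral_of_le ha.le]
    _ = _ := by
        rw [integral_rpow (Or.inl (by linarith)), Real.zero_rpow (by linarith)]
        congr 2
        · rw [sub_zero]; congr 1; ring
        · ring

lemma eT_bound {ω : ℕ} (hω : 1 ≤ ω) {η δ : ℝ} (hδ : 0 < δ) (hδ1 : δ < 1/8) {M : ℕ} {K : ℝ} (hK : 0 ≤ K)
    (hb : ∀ u, 0 < u → u ≤ 1 → ‖fM η M u‖ ≤ K * u ^ (3 + 2 * M)) {k : ℕ} (hk : 1 ≤ k) {τ : ℂ} (hτ : τ ∈ UM M) :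
    ‖eT ω η δ M k τ‖ ≤ K * (k:ℝ) ^ (-(1 + 2 * (1/2 : ℝ))) := by
  have hM : (0:ℝ) ≤ M := by positivity
  have h1 : (1:ℝ) ≤ ω := by exact_mod_cast hω
  have h2 : (1:ℝ) ≤ k := by exact_mod_cast hk
  have hk0 : (0:ℝ) < k := by linarith
  have hw0 : (0:ℝ) < ω := by linarith
  have hkw : 0 < (k:ℝ) * ω := by positivity
  unfold eT
  rw [norm_mul, Complex.norm_cpow_eq_rpow_re_of_pos hkw]
  have h3 := eI_norm (cK_pos hω δ hk) (cK_le_one hω (by linarith) hk) hb hτ.2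
  set σ := τ.re with hσ
  have h4 : (-(2 * τ + 1)).re = -(2 * σ + 1) := by simp [hσ]
  rw [h4]
  have h5 : ((k:ℝ) * ω) ^ (-(2 * σ + 1)) * (cK ω δ k) ^ (4 + 2 * M - 2 * σ) =
      (k:ℝ) ^ (-(2 * σ + 1) + (δ - 1) * (4 + 2 * M - 2 * σ)) * (ω:ℝ) ^ (-(5 + 2 * M : ℝ)) := by
    unfold cK
    rw [Real.mul_rpow hk0.le hw0.le, Real.div_rpow (by positivity) hw0.le, ← Real.rpow_mul hk0.le,
      div_eq_mul_inv, ← Real.rpow_neg hw0.le, mul_mul_mul_comm, ← Real.rpow_add hk0, ← Real.rpow_add hw0]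
    congr 2; ring
  have hτ1 := hτ.1
  have hτ2 := hτ.2
  rw [← hσ] at hτ1 hτ2
  have h6 : (cK ω δ k) ^ (4 + 2 * M - 2 * σ) / (4 + 2 * M - 2 * σ) ≤ (cK ω δ k) ^ (4 + 2 * M - 2 * σ) := by
    refine div_le_self ?_ (by linarith)
    have := cK_pos hω δ hk
    positivity
  calc _ ≤ ((k:ℝ) * ω) ^ (-(2 * σ + 1)) * (K * (cK ω δ k) ^ (4 + 2 * M - 2 * σ)) := by
        refine mul_le_mul_of_nonneg_left (h3.trans ?_) (by positivity)
        gcongr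
    _ = K * ((k:ℝ) ^ (-(2 * σ + 1) + (δ - 1) * (4 + 2 * M - 2 * σ)) * (ω:ℝ) ^ (-(5 + 2 * M : ℝ))) := by
        rw [← h5]; ring
    _ ≤ K * ((k:ℝ) ^ (-(1 + 2 * (1/2 : ℝ))) * 1) := by
        gcongr
        · nlinarith
        · exact Real.rpow_le_one_of_one_le_of_nonpos h1 (by linarith)
    _ = _ := by rw [mul_one]

noncomputable def Em (ω : ℕ) (η δ : ℝ) (M : ℕ) (τ : ℂ) : ℂ := ∑' k : ℕ, eT ω η δ M (k + 1) τ

lemma eT_summable {ω : ℕ} (hω : 1 ≤ ω) (η : ℝ) {δ : ℝ} (hδ : 0 < δ) (hδ1 : δ < 1/8) {M : ℕ} {τ : ℂ}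
    (hτ : τ ∈ UM M) : Summable (fun k : ℕ => eT ω η δ M (k + 1) τ) := by
  obtain ⟨K, hK, hb⟩ := fM_bound η M
  exact Summable.of_norm_bounded ((summable_k (1/2) (by norm_num)).mul_left K)
    fun k => eT_bound hω hδ hδ1 hK hb (by omega) hτ

lemma Em_differentiableAt {ω : ℕ} (hω : 1 ≤ ω) (η : ℝ) {δ : ℝ} (hδ : 0 < δ) (hδ1 : δ < 1/8) {M : ℕ} {τ : ℂ}
    (hτ : τ ∈ UM M) : DifferentiableAt ℂ (Em ω η δ M) τ := by
  obtain ⟨K, hK, hb⟩ := fM_bound η M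
  have := Complex.differentiableOn_tsum_of_summable_norm (F := fun k : ℕ => eT ω η δ M (k+1))
    ((summable_k (1/2) (by norm_num)).mul_left K) (fun k s hs => (eT_differentiableAt hω η δ M (by omega)
      hs.2).differentiableWithinAt) (UM_open M) (fun k s hs => eT_bound hω hδ hδ1 hK hb (by omega) hs)
  exact this.differentiableAt ((UM_open M).mem_nhds hτ)

noncomputable def xT (ω : ℕ) (η δ : ℝ) (M : ℕ) (τ : ℂ) : ℂ :=
  bet η M * (ω : ℂ) ^ (-(5 + 2 * M : ℂ)) / (4 + 2 * M - 2 * τ) *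
    riemannZeta (1 + 2 * δ * τ + (1 - δ) * (4 + 2 * M))

lemma ofReal_cpow_exp {x : ℝ} (hx : 0 < x) (z : ℂ) : (x:ℂ) ^ z = Complex.exp ((Real.log x : ℂ) * z) := by
  rw [Complex.cpow_def_of_ne_zero (by exact_mod_cast hx.ne'), Complex.ofReal_log hx.le]

lemma eT_succ {ω : ℕ} (hω : 1 ≤ ω) (η δ : ℝ) (M : ℕ) {k : ℕ} (hk : 1 ≤ k) {τ : ℂ}
    (hτ : τ.re < 1) : eT ω η δ M k τ = bet η M * (ω : ℂ) ^ (-(5 + 2 * M : ℂ)) / (4 + 2 * M - 2 * τ) *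
      (k:ℂ) ^ (-(1 + 2 * δ * τ + (1 - δ) * (4 + 2 * M))) + eT ω η δ (M + 1) k τ := by
  have hM : (0:ℝ) ≤ M := by positivity
  have h1 : (0:ℝ) < ω := by exact_mod_cast hω
  have h2 : (0:ℝ) < k := by exact_mod_cast hk
  have ha := cK_pos hω δ hk
  set a := cK ω δ k with hadef
  have hI : eI η M a (1 - 2 * τ) = bet η M * ((a:ℂ) ^ (4 + 2 * M - 2 * τ) / (4 + 2 * M - 2 * τ)) +
      eI η (M+1) a (1 - 2 * τ) := by
    rw [eI_eq, eI_eq]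
    have e1 : ∀ u ∈ Ioc 0 a, (u:ℂ) ^ (1 - 2 * τ - 1) * (fM η M u : ℂ) =
        bet η M * (u:ℂ) ^ (3 + 2 * M - 2 * τ) + (u:ℂ) ^ (1 - 2 * τ - 1) * (fM η (M+1) u : ℂ) := by
      intro u hu
      have huc : (u:ℂ) ≠ 0 := by exact_mod_cast hu.1.ne'
      rw [fM_succ]
      have : (3 + 2 * M - 2 * τ : ℂ) = (1 - 2 * τ - 1) + ((3 + 2 * M : ℕ) : ℂ) := by push_cast; ring
      rw [this, Complex.cpow_add _ _ huc, Complex.cpow_natCast]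
      push_cast; ring
    have hre : -1 < (3 + 2 * M - 2 * τ : ℂ).re := by simp; linarith
    have hIntv : IntervalIntegrable (fun u : ℝ => (u:ℂ) ^ (3 + 2 * M - 2 * τ : ℂ)) volume 0 a :=
      intervalIntegral.intervalIntegrable_cpow' hre
    rw [intervalIntegrable_iff_integrableOn_Ioc_of_le ha.le] at hIntv
    rw [setIntegral_congr_fun measurableSet_Ioc e1, integral_add (hIntv.const_mul _)
      (eI_integrable η (M+1) a (by simp; linarith)), integral_const_mul,
      ← intervalIntegral.integral_of_le ha.le, integral_cpow (Or.inl hre)]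
    congr 2
    have e2 : (3 + 2 * M - 2 * τ + 1 : ℂ) = 4 + 2 * M - 2 * τ := by ring
    rw [e2, Complex.ofReal_zero, Complex.zero_cpow, sub_zero]
    intro h
    have := congrArg Complex.re h
    simp at this; linarith
  unfold eT
  rw [← hadef, hI, mul_add]
  congr 1
  have e3 : (((k : ℝ) * (ω : ℝ) : ℝ) : ℂ) ^ (-(2 * τ + 1)) * (a:ℂ) ^ (4 + 2 * M - 2 * τ) =
      (ω : ℂ) ^ (-(5 + 2 * M : ℂ)) * (k:ℂ) ^ (-(1 + 2 * δ * τ + (1 - δ) * (4 + 2 * M))) := by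
    have hk' : (k:ℂ) = ((k:ℝ):ℂ) := by norm_cast
    have hw' : (ω:ℂ) = ((ω:ℝ):ℂ) := by norm_cast
    rw [hk', hw', ofReal_cpow_exp (mul_pos h2 h1), ofReal_cpow_exp ha, ofReal_cpow_exp h1, ofReal_cpow_exp h2,
      ← Complex.exp_add, ← Complex.exp_add]
    have : Real.log a = (δ - 1) * Real.log k - Real.log ω := by
      rw [hadef]; unfold cK
      rw [Real.log_div (by positivity) h1.ne', Real.log_rpow h2]
    rw [this, Real.log_mul h2.ne' h1.ne']
    congr 1; push_cast; ring
  linear_combination (bet η M / (4 + 2 * M - 2 * τ) : ℂ) * e3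

lemma Em_succ {ω : ℕ} (hω : 1 ≤ ω) (η : ℝ) {δ : ℝ} (hδ : 0 < δ) (hδ1 : δ < 1/8) {M : ℕ} {τ : ℂ}
    (hτ : τ ∈ UM M) : Em ω η δ M τ = xT ω η δ M τ + Em ω η δ (M + 1) τ := by
  have hM : (0:ℝ) ≤ M := by positivity
  have hτ' : τ ∈ UM (M + 1) := ⟨by have := hτ.1; push_cast; linarith, hτ.2⟩
  have hτ1 := hτ.1
  have hre : 1 < (1 + 2 * δ * τ + (1 - δ) * (4 + 2 * M) : ℂ).re := by
    simp
    nlinarith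
  have hs := (eT_summable hω η hδ hδ1 hτ')
  unfold Em
  rw [tsum_congr (fun k => eT_succ hω η δ M (Nat.succ_le_succ (Nat.zero_le k)) hτ.2)]
  have hz : Summable (fun k : ℕ => ((k + 1 : ℕ):ℂ) ^ (-(1 + 2 * δ * τ + (1 - δ) * (4 + 2 * M) : ℂ))) := by
    have := (summable_nat_add_iff 1).mpr (Complex.summable_one_div_nat_cpow.mpr hre)
    refine this.congr fun k => ?_
    rw [Complex.cpow_neg, one_div]
  rw [Summable.tsum_add (hz.mul_left _) hs]
  congr 1
  rw [tsum_mul_left, xT, zeta_eq_tsum_one_div_nat_add_one_cpow hre]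
  congr 1
  refine tsum_congr fun k => ?_
  rw [Complex.cpow_neg, one_div]; push_cast; rfl

noncomputable def Dm (ω : ℕ) (η δ : ℝ) (M : ℕ) (τ : ℂ) : ℂ :=
  (ω:ℂ) ^ (-(2 * τ + 1)) * riemannZeta (2 * τ + 1) * Mt η τ -
    ∑ m ∈ Finset.range M, xT ω η δ m τ - Em ω η δ M τ

lemma dT_split {ω : ℕ} (hω : 1 ≤ ω) {η : ℝ} (hη : 0 < η) (δ : ℝ) {k : ℕ} (hk : 1 ≤ k) {τ : ℂ}
    (h0 : 0 < τ.re) (h1 : τ.re < 1) :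
    dT ω η δ k τ = (((k : ℝ) * (ω : ℝ) : ℝ) : ℂ) ^ (-(2 * τ + 1)) * Mt η τ - eT ω η δ 0 k τ := by
  have ha := cK_pos hω δ hk
  unfold dT eT
  rw [← mul_sub]
  congr 1
  rw [eI_eq, ← mellin_coneA2 hη (by linarith) (by linarith), eq_sub_iff_add_eq, fM_zero]
  have hconv := coneA2_mellinConvergent hη (s := 1 - 2 * τ) (by simp; linarith) (by simp; linarith)
  unfold MellinConvergent at hconv
  simp only [smul_eq_mul] at hconv
  unfold mellin
  simp only [smul_eq_mul]
  rw [← Ioc_union_Ioi_eq_Ioi ha.le] at hconv ⊢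
  rw [setIntegral_union (by
    rw [Set.disjoint_left]; intro x hx hx'; exact absurd hx.2 (not_le.mpr hx')) measurableSet_Ioi
    (hconv.mono_set subset_union_left) (hconv.mono_set subset_union_right), add_comm]
  congr 2
  ext u; congr 2; ring

lemma Dser_eq {ω : ℕ} (hω : 1 ≤ ω) {η : ℝ} (hη : 0 < η) {δ : ℝ} (hδ : 0 < δ) (hδ1 : δ < 1/8) {τ : ℂ}
    (h0 : 0 < τ.re) (h1 : τ.re < 1) : Dser ω η δ τ = Dm ω η δ 0 τ := by
  have hw : (0:ℝ) < ω := by exact_mod_cast hω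
  have hτ : τ ∈ UM 0 := ⟨by simp; linarith, h1⟩
  have hs := eT_summable hω η hδ hδ1 hτ
  have hre : 1 < (2 * τ + 1).re := by simp; linarith
  have hz : Summable (fun k : ℕ => ((k + 1 : ℕ):ℂ) ^ (-(2 * τ + 1))) := by
    have := (summable_nat_add_iff 1).mpr (Complex.summable_one_div_nat_cpow.mpr hre)
    refine this.congr fun k => ?_
    rw [Complex.cpow_neg, one_div]
  have hterm : ∀ k : ℕ, dT ω η δ (k + 1) τ =
      ((ω:ℂ) ^ (-(2 * τ + 1)) * Mt η τ) * ((k + 1 : ℕ):ℂ) ^ (-(2 * τ + 1)) - eT ω η δ 0 (k + 1) τ := by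
    intro k
    rw [dT_split hω hη δ (by omega) h0 h1, Complex.ofReal_mul,
      Complex.mul_cpow_ofReal_nonneg (by positivity) hw.le]
    push_cast; ring
  unfold Dser Dm Em
  rw [tsum_congr hterm, Summable.tsum_sub (hz.mul_left _) hs, tsum_mul_left,
    zeta_eq_tsum_one_div_nat_add_one_cpow hre]
  have : ∀ k : ℕ, ((k + 1 : ℕ):ℂ) ^ (-(2 * τ + 1)) = 1 / ((k:ℂ) + 1) ^ (2 * τ + 1) := by
    intro k; rw [Complex.cpow_neg, one_div]; push_cast; rfl
  simp_rw [this]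
  simp
  ring

lemma UM_mono {M N : ℕ} (h : M ≤ N) : UM M ⊆ UM N := fun τ hτ =>
  ⟨by have : (M:ℝ) ≤ N := by exact_mod_cast h
      have := hτ.1; linarith, hτ.2⟩

lemma Dm_succ {ω : ℕ} (hω : 1 ≤ ω) (η : ℝ) {δ : ℝ} (hδ : 0 < δ) (hδ1 : δ < 1/8) {M : ℕ} {τ : ℂ}
    (hτ : τ ∈ UM M) : Dm ω η δ (M + 1) τ = Dm ω η δ M τ := by
  unfold Dm
  rw [Em_succ hω η hδ hδ1 hτ, Finset.sum_range_succ]; ring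

lemma Dm_mono {ω : ℕ} (hω : 1 ≤ ω) (η : ℝ) {δ : ℝ} (hδ : 0 < δ) (hδ1 : δ < 1/8) {M N : ℕ} (h : M ≤ N) {τ : ℂ}
    (hτ : τ ∈ UM M) : Dm ω η δ N τ = Dm ω η δ M τ := by
  induction N, h using Nat.le_induction with
  | base => rfl
  | succ n hn ih => rw [Dm_succ hω η hδ hδ1 (UM_mono hn hτ), ih]

/-- global meromorphic continuation of `Dser` -/
noncomputable def Dt (ω : ℕ) (η δ : ℝ) (τ : ℂ) : ℂ :=
  if 0 < τ.re then Dser ω η δ τ else Dm ω η δ ⌈-τ.re⌉₊ τ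

lemma Dt_eq {ω : ℕ} (hω : 1 ≤ ω) {η : ℝ} (hη : 0 < η) {δ : ℝ} (hδ : 0 < δ) (hδ1 : δ < 1/8) {M : ℕ} {τ : ℂ}
    (hτ : τ ∈ UM M) : Dt ω η δ τ = Dm ω η δ M τ := by
  unfold Dt
  split_ifs with h
  · rw [Dser_eq hω hη hδ hδ1 h hτ.2]
    exact (Dm_mono hω η hδ hδ1 (Nat.zero_le _) ⟨by simp; linarith, hτ.2⟩).symm
  · have hN : τ ∈ UM ⌈-τ.re⌉₊ := ⟨by have := Nat.le_ceil (-τ.re); linarith, hτ.2⟩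
    rcases le_total M ⌈-τ.re⌉₊ with h' | h'
    · exact Dm_mono hω η hδ hδ1 h' hτ
    · exact (Dm_mono hω η hδ hδ1 h' hN).symm

lemma riemannZeta_meromorphic : Meromorphic riemannZeta := by
  intro s
  by_cases hs : s = 1
  · subst hs
    have hev : ∀ᶠ z in 𝓝[≠] (1:ℂ), DifferentiableAt ℂ (fun z => (z - 1) * riemannZeta z) z := by
      filter_upwards [self_mem_nhdsWithin] with z hz
      exact (by fun_prop : DifferentiableAt ℂ (fun z : ℂ => z - 1) z).mul (differentiableAt_riemannZeta hz)
    have hd := Complex.analyticAt_of_differentiable_on_punctured_nhds_of_continuousAt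
      (f := Function.update (fun z => (z - 1) * riemannZeta z) 1 1) (c := (1:ℂ)) ?_ ?_
    · have h2 : MeromorphicAt (fun z : ℂ => (z - 1)) 1 := by
        refine AnalyticAt.meromorphicAt (by fun_prop)
      have h3 := h2.inv.mul hd.meromorphicAt
      refine h3.congr ?_
      filter_upwards [self_mem_nhdsWithin] with z hz
      have hz' : z - 1 ≠ 0 := sub_ne_zero.mpr hz
      simp only [Pi.mul_apply, Pi.inv_apply]
      rw [Function.update_of_ne hz]
      field_simp
    · filter_upwards [hev, self_mem_nhdsWithin] with z hz hz1
      refine hz.congr_of_eventuallyEq ?_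
      filter_upwards [isOpen_ne.mem_nhds hz1] with y hy
      rw [Function.update_of_ne hy]
    · rw [continuousAt_update_same]
      exact riemannZeta_residue_one
  · refine AnalyticAt.meromorphicAt ?_
    refine DifferentiableOn.analyticAt (s := {(1:ℂ)}ᶜ) ?_ (isOpen_compl_singleton.mem_nhds hs)
    exact fun z hz => (differentiableAt_riemannZeta hz).differentiableWithinAt

lemma meromorphicAt_affine {f : ℂ → ℂ} (hf : Meromorphic f) (g : ℂ → ℂ) (hg : Differentiable ℂ g) (z : ℂ) :
    MeromorphicAt (fun s => f (g s)) z :=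
  MeromorphicAt.comp_analyticAt (hf (g z)) (hg.analyticAt z)

lemma meromorphicAt_diff (g : ℂ → ℂ) (hg : Differentiable ℂ g) (z : ℂ) : MeromorphicAt g z :=
  (hg.analyticAt z).meromorphicAt

lemma Mt_meromorphic {η : ℝ} (hη : 0 < η) : Meromorphic (Mt η) := by
  have hc : 0 < Real.sinh η := Real.sinh_pos_iff.mpr hη
  intro z
  unfold Mt
  refine MeromorphicAt.mul (MeromorphicAt.mul (MeromorphicAt.const _ _) ?_)
    (MeromorphicAt.div (MeromorphicAt.mul ?_ ?_) (MeromorphicAt.const _ _))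
  · refine meromorphicAt_diff _ (fun s => ?_) z
    exact DifferentiableAt.const_cpow (by fun_prop) (Or.inl (by exact_mod_cast hc.ne'))
  · exact meromorphicAt_affine Meromorphic.Gamma _ (by fun_prop) z
  · exact meromorphicAt_affine Meromorphic.Gamma _ (by fun_prop) z

lemma xT_meromorphic (ω : ℕ) (η δ : ℝ) (M : ℕ) : Meromorphic (xT ω η δ M) := by
  intro z
  unfold xT
  refine MeromorphicAt.mul (MeromorphicAt.div (MeromorphicAt.const _ _) ?_) ?_
  · exact meromorphicAt_diff _ (by fun_prop) z
  · exact meromorphicAt_affine riemannZeta_meromorphic _ (by fun_prop) z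

lemma Em_analyticAt {ω : ℕ} (hω : 1 ≤ ω) (η : ℝ) {δ : ℝ} (hδ : 0 < δ) (hδ1 : δ < 1/8) {M : ℕ} {τ : ℂ}
    (hτ : τ ∈ UM M) : AnalyticAt ℂ (Em ω η δ M) τ :=
  DifferentiableOn.analyticAt (s := UM M)
    (fun _ hz => (Em_differentiableAt hω η hδ hδ1 hz).differentiableWithinAt) ((UM_open M).mem_nhds hτ)

lemma Dm_meromorphicAt {ω : ℕ} (hω : 1 ≤ ω) {η : ℝ} (hη : 0 < η) {δ : ℝ} (hδ : 0 < δ) (hδ1 : δ < 1/8) {M : ℕ} {τ : ℂ}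
    (hτ : τ ∈ UM M) : MeromorphicAt (Dm ω η δ M) τ := by
  have hw : (ω:ℂ) ≠ 0 := by exact_mod_cast (by omega : ω ≠ 0)
  unfold Dm
  refine MeromorphicAt.sub (MeromorphicAt.sub (MeromorphicAt.mul (MeromorphicAt.mul ?_ ?_) (Mt_meromorphic hη τ)) ?_) ?_
  · refine meromorphicAt_diff _ (fun s => ?_) _
    exact DifferentiableAt.const_cpow (by fun_prop) (Or.inl hw)
  · exact meromorphicAt_affine riemannZeta_meromorphic _ (by fun_prop) _
  · exact MeromorphicAt.fun_sum fun m _ => xT_meromorphic ω η δ m τ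
  · exact (Em_analyticAt hω η hδ hδ1 hτ).meromorphicAt

lemma Dt_meromorphic {ω : ℕ} (hω : 1 ≤ ω) {η : ℝ} (hη : 0 < η) {δ : ℝ} (hδ : 0 < δ) (hδ1 : δ < 1/8) :
    Meromorphic (Dt ω η δ) := by
  intro τ
  by_cases h : 0 < τ.re
  · have hop : IsOpen {s : ℂ | 0 < s.re} := isOpen_lt continuous_const Complex.continuous_re
    refine AnalyticAt.meromorphicAt (DifferentiableOn.analyticAt (s := {s : ℂ | 0 < s.re}) ?_ (hop.mem_nhds h))
    refine DifferentiableOn.congr (f := Dser ω η δ) (fun s hs =>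
      (Dser_differentiableAt hω hη hδ hs).differentiableWithinAt) fun s hs => ?_
    exact if_pos hs
  · have hτ : τ ∈ UM ⌈-τ.re⌉₊ := ⟨by have := Nat.le_ceil (-τ.re); linarith, by linarith⟩
    refine (Dm_meromorphicAt hω hη hδ hδ1 hτ).congr ?_
    refine Filter.EventuallyEq.filter_mono ?_ nhdsWithin_le_nhds
    filter_upwards [(UM_open _).mem_nhds hτ] with s hs
    exact (Dt_eq hω hη hδ hδ1 hs).symm

noncomputable def Sf (s : ℂ) : ℂ := 2 * Complex.sin ((Real.pi : ℂ) * s) / (Real.pi : ℂ)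

noncomputable def pj (j : ℕ) (s : ℂ) : ℂ := pochSym s j / ((Nat.factorial j : ℂ) * 4 ^ j)

noncomputable def qj (R : ℝ) (j : ℕ) : ℝ := (∏ i ∈ Finset.range j, (R + i)) / ((Nat.factorial j : ℝ) * 4 ^ j)

lemma Sf_diff : Differentiable ℂ Sf := by unfold Sf; fun_prop

lemma pj_diff (j : ℕ) : Differentiable ℂ (pj j) := by
  unfold pj pochSym
  refine Differentiable.div_const ?_ _
  fun_prop

lemma term_eq (ω : ℕ) (η δ : ℝ) (k j : ℕ) (s : ℂ) :
    Omega2Term ω η δ k j s = Sf s * pj j s * dT ω η δ k (s + j) := by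
  unfold Omega2Term Sf pj dT cK
  rw [← mul_assoc]
  congr 2
  · congr 1; ring
  · ext u; congr 2; ring

lemma pj_norm_le {R : ℝ} {s : ℂ} (hs : ‖s‖ ≤ R) (j : ℕ) : ‖pj j s‖ ≤ qj R j := by
  unfold pj qj pochSym
  rw [norm_div, norm_prod]
  have : ‖((Nat.factorial j : ℂ) * 4 ^ j)‖ = (Nat.factorial j : ℝ) * 4 ^ j := by simp
  rw [this]
  gcongr with i hi
  refine (norm_add_le _ _).trans ?_
  simpa using hs

lemma qj_pos {R : ℝ} (hR : 0 < R) (j : ℕ) : 0 < qj R j := by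
  unfold qj
  have : 0 < ∏ i ∈ Finset.range j, (R + i) := Finset.prod_pos fun i _ => by positivity
  positivity

lemma qj_summable {R : ℝ} (hR : 0 < R) : Summable (qj R) := by
  refine summable_of_ratio_test_tendsto_lt_one (l := 1/4) (by norm_num)
    (Eventually.of_forall fun j => (qj_pos hR j).ne') ?_
  have e : ∀ j : ℕ, ‖qj R (j+1)‖ / ‖qj R j‖ = (1/4) * ((j + R) / (j + 1)) := by
    intro j
    rw [Real.norm_of_nonneg (qj_pos hR _).le, Real.norm_of_nonneg (qj_pos hR _).le]
    have : qj R (j+1) = qj R j * ((1/4) * ((j + R) / (j + 1))) := by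
      unfold qj
      rw [Finset.prod_range_succ, Nat.factorial_succ, pow_succ]
      push_cast
      field_simp
      ring
    rw [this, mul_div_cancel_left₀ _ (qj_pos hR _).ne']
  simp_rw [e]
  have h1 : Tendsto (fun j : ℕ => ((j:ℝ) + R) / (j + 1)) atTop (𝓝 1) := by
    have h2 : Tendsto (fun j : ℕ => 1 + (R - 1) / ((j:ℝ) + 1)) atTop (𝓝 (1 + 0)) := by
      refine tendsto_const_nhds.add ?_
      exact tendsto_const_nhds.div_atTop (tendsto_atTop_add_const_right _ _ tendsto_natCast_atTop_atTop)
    rw [add_zero] at h2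
    refine h2.congr fun j => ?_
    have : (j:ℝ) + 1 ≠ 0 := by positivity
    field_simp; ring
  simpa using h1.const_mul (1/4 : ℝ)

noncomputable def tailJ (ω : ℕ) (η δ : ℝ) (J : ℕ) (s : ℂ) : ℂ :=
  ∑' j : ℕ, pj (j + J) s * Dt ω η δ (s + ((j + J : ℕ) : ℂ))

/-- The continuation of `Ω₂`, correct off the removable singularities. -/
noncomputable def OmT (ω : ℕ) (η δ : ℝ) (s : ℂ) : ℂ :=
  Sf s * ∑' j : ℕ, pj j s * Dt ω η δ (s + (j : ℂ))

def WJ (J : ℕ) (R : ℝ) : Set ℂ := {s | ‖s‖ < R ∧ 1/2 - (J:ℝ) < s.re}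

lemma WJ_open (J : ℕ) (R : ℝ) : IsOpen (WJ J R) :=
  (isOpen_lt continuous_norm continuous_const).inter (isOpen_lt continuous_const Complex.continuous_re)

lemma Dt_pos (ω : ℕ) (η δ : ℝ) {τ : ℂ} (h : 0 < τ.re) : Dt ω η δ τ = Dser ω η δ τ := if_pos h

lemma Dt_differentiableAt {ω : ℕ} (hω : 1 ≤ ω) {η : ℝ} (hη : 0 < η) {δ : ℝ} (hδ : 0 < δ) {τ : ℂ} (h : 0 < τ.re) :
    DifferentiableAt ℂ (Dt ω η δ) τ := by
  refine (Dser_differentiableAt hω hη hδ h).congr_of_eventuallyEq ?_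
  have hop : IsOpen {s : ℂ | 0 < s.re} := isOpen_lt continuous_const Complex.continuous_re
  filter_upwards [hop.mem_nhds h] with s hs using Dt_pos ω η δ hs

lemma WJ_re {J : ℕ} {R : ℝ} {s : ℂ} (hs : s ∈ WJ J R) (j : ℕ) : 1/2 < (s + ((j + J : ℕ) : ℂ)).re := by
  have := hs.2
  have h : (0:ℝ) ≤ j := by positivity
  simp; linarith

lemma tail_bound {ω : ℕ} (hω : 1 ≤ ω) {η : ℝ} (hη : 0 < η) {δ : ℝ} (hδ : 0 < δ) (J : ℕ) {R : ℝ} (hR : 0 < R) :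
    ∃ u : ℕ → ℝ, Summable u ∧ ∀ j, ∀ s ∈ WJ J R, ‖pj (j + J) s * Dt ω η δ (s + ((j + J : ℕ) : ℂ))‖ ≤ u j := by
  obtain ⟨B, hB, hb⟩ := Dser_bound hω hη hδ
  refine ⟨fun j => qj R (j + J) * B, ((summable_nat_add_iff J).mpr (qj_summable hR)).mul_right B, ?_⟩
  intro j s hs
  have := WJ_re hs j
  rw [norm_mul, Dt_pos _ _ _ (by linarith)]
  exact mul_le_mul (pj_norm_le hs.1.le _) (hb _ this.le) (norm_nonneg _) (qj_pos hR _).le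

lemma tailJ_analyticAt {ω : ℕ} (hω : 1 ≤ ω) {η : ℝ} (hη : 0 < η) {δ : ℝ} (hδ : 0 < δ) {J : ℕ} {R : ℝ} (hR : 0 < R)
    {s : ℂ} (hs : s ∈ WJ J R) : AnalyticAt ℂ (tailJ ω η δ J) s := by
  obtain ⟨u, hu, hb⟩ := tail_bound hω hη hδ J hR
  refine DifferentiableOn.analyticAt (s := WJ J R) ?_ ((WJ_open J R).mem_nhds hs)
  refine Complex.differentiableOn_tsum_of_summable_norm hu (fun j z hz => ?_) (WJ_open J R) hb
  refine DifferentiableAt.differentiableWithinAt (DifferentiableAt.mul (pj_diff _ z) ?_)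
  refine DifferentiableAt.comp z (g := Dt ω η δ) (f := fun z => z + ((j + J : ℕ) : ℂ)) ?_ (by fun_prop)
  exact Dt_differentiableAt hω hη hδ (by have := WJ_re hz j; linarith)

lemma OmT_split {ω : ℕ} (hω : 1 ≤ ω) {η : ℝ} (hη : 0 < η) {δ : ℝ} (hδ : 0 < δ) {J : ℕ} {R : ℝ} (hR : 0 < R)
    {s : ℂ} (hs : s ∈ WJ J R) : OmT ω η δ s =
      Sf s * (∑ j ∈ Finset.range J, pj j s * Dt ω η δ (s + (j : ℂ)) + tailJ ω η δ J s) := by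
  obtain ⟨u, hu, hb⟩ := tail_bound hω hη hδ J hR
  unfold OmT tailJ
  congr 1
  symm
  exact Summable.sum_add_tsum_nat_add' (f := fun j : ℕ => pj j s * Dt ω η δ (s + (j : ℂ)))
    (Summable.of_norm_bounded hu fun j => hb j s hs)

lemma OmT_meromorphic {ω : ℕ} (hω : 1 ≤ ω) {η : ℝ} (hη : 0 < η) {δ : ℝ} (hδ : 0 < δ) (hδ1 : δ < 1/8) :
    Meromorphic (OmT ω η δ) := by
  intro s
  obtain ⟨J, hJ⟩ := exists_nat_gt (1/2 - s.re)
  have hR : 0 < ‖s‖ + 1 := by positivity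
  have hs : s ∈ WJ J (‖s‖ + 1) := ⟨by linarith, by linarith⟩
  have hm : MeromorphicAt (fun s => Sf s * (∑ j ∈ Finset.range J, pj j s * Dt ω η δ (s + (j : ℂ)) + tailJ ω η δ J s)) s := by
    refine (meromorphicAt_diff _ Sf_diff s).mul (MeromorphicAt.add (MeromorphicAt.fun_sum fun j _ => ?_) ?_)
    · exact (meromorphicAt_diff _ (pj_diff j) s).mul
        (meromorphicAt_affine (Dt_meromorphic hω hη hδ hδ1) _ (by fun_prop) s)
    · exact (tailJ_analyticAt hω hη hδ hR hs).meromorphicAt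
  refine hm.congr ?_
  refine Filter.EventuallyEq.filter_mono ?_ nhdsWithin_le_nhds
  filter_upwards [(WJ_open _ _).mem_nhds hs] with z hz
  exact (OmT_split hω hη hδ hR hz).symm

lemma term_bound {ω : ℕ} (hω : 1 ≤ ω) {η : ℝ} (hη : 0 < η) {δ : ℝ} (hδ : 0 < δ) {R : ℝ} (hR : 0 < R) :
    ∃ u : ℕ × ℕ → ℝ, Summable u ∧ ∀ p, ∀ s ∈ WJ 0 R, ‖Omega2Term ω η δ (p.1 + 1) p.2 s‖ ≤ u p := by
  obtain ⟨B, hB, hb⟩ := dT_bound hω hη hδ (ε := 1/2) (by norm_num) (by norm_num)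
  obtain ⟨S, hS⟩ := (isCompact_closedBall (0:ℂ) R).exists_bound_of_continuousOn Sf_diff.continuous.continuousOn
  have hS0 : 0 ≤ S := (norm_nonneg _).trans (hS 0 (by simp [hR.le]))
  refine ⟨fun p => S * (((p.1 + 1 : ℕ) : ℝ) ^ (-(1 + 2 * (1/2 : ℝ))) * qj R p.2 * B), ?_, ?_⟩
  · refine Summable.mul_left _ (Summable.mul_right _ ?_)
    exact (summable_k (1/2) (by norm_num)).mul_of_nonneg (qj_summable hR) (fun k => by positivity)
      (fun j => (qj_pos hR j).le)
  · intro p s hs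
    rw [term_eq, norm_mul, norm_mul]
    have h1 : ‖Sf s‖ ≤ S := hS s (by simpa using hs.1.le)
    have h2 := pj_norm_le hs.1.le p.2
    have hre : 1/2 ≤ (s + p.2).re := by
      have := hs.2
      simp at this ⊢
      have h : (0:ℝ) ≤ p.2 := by positivity
      linarith
    have h3 := hb (p.1 + 1) (by omega) (s + p.2) hre
    have h4 := (qj_pos hR p.2).le
    calc _ ≤ S * qj R p.2 * (B * ((p.1 + 1 : ℕ) : ℝ) ^ (-(1 + 2 * (1/2 : ℝ)))) := by gcongr
      _ = _ := by ring

lemma strip_WJ {s : ℂ} (hs : 1 < s.re) : s ∈ WJ 0 (‖s‖ + 1) := ⟨by linarith, by simp; linarith⟩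

lemma strip_summable {ω : ℕ} (hω : 1 ≤ ω) {η : ℝ} (hη : 0 < η) {δ : ℝ} (hδ : 0 < δ) {s : ℂ} (hs : 1 < s.re) :
    Summable (fun p : ℕ × ℕ => ‖Omega2Term ω η δ (p.1 + 1) p.2 s‖) := by
  obtain ⟨u, hu, hb⟩ := term_bound hω hη hδ (R := ‖s‖ + 1) (by positivity)
  exact hu.of_nonneg_of_le (fun _ => norm_nonneg _) fun p => hb p s (strip_WJ hs)

lemma strip_unif {ω : ℕ} (hω : 1 ≤ ω) {η : ℝ} (hη : 0 < η) {δ : ℝ} (hδ : 0 < δ) :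
    TendstoLocallyUniformlyOn
          (fun (N : Finset (ℕ × ℕ)) (s : ℂ) => ∑ p ∈ N, Omega2Term ω η δ (p.1 + 1) p.2 s)
          (fun s : ℂ => ∑' p : ℕ × ℕ, Omega2Term ω η δ (p.1 + 1) p.2 s)
          atTop {s : ℂ | 1 < s.re ∧ s.re < 2} := by
  rw [tendstoLocallyUniformlyOn_iff_forall_tendsto]
  intro s hs
  obtain ⟨u, hu, hb⟩ := term_bound hω hη hδ (R := ‖s‖ + 1) (by positivity)
  have h := tendstoUniformlyOn_tsum hu hb
  rw [tendstoUniformlyOn_iff_tendsto] at h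
  refine h.mono_left (Filter.prod_mono le_rfl ?_)
  rw [le_principal_iff]
  exact mem_nhdsWithin_of_mem_nhds ((WJ_open _ _).mem_nhds (strip_WJ hs.1))

lemma strip_eq {ω : ℕ} (hω : 1 ≤ ω) {η : ℝ} (hη : 0 < η) {δ : ℝ} (hδ : 0 < δ) {s : ℂ} (hs : 1 < s.re) :
    OmT ω η δ s = ∑' p : ℕ × ℕ, Omega2Term ω η δ (p.1 + 1) p.2 s := by
  have hsum := (strip_summable hω hη hδ hs).of_norm
  rw [← (Equiv.prodComm ℕ ℕ).tsum_eq]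
  have hsum' : Summable (fun p : ℕ × ℕ => Omega2Term ω η δ (p.2 + 1) p.1 s) :=
    (Equiv.prodComm ℕ ℕ).summable_iff.mpr hsum
  have : ∀ p : ℕ × ℕ, Omega2Term ω η δ (((Equiv.prodComm ℕ ℕ) p).1 + 1) ((Equiv.prodComm ℕ ℕ) p).2 s =
    Omega2Term ω η δ (p.2 + 1) p.1 s := fun p => rfl
  rw [tsum_congr this, hsum'.tsum_prod]
  unfold OmT
  rw [← tsum_mul_left]
  refine tsum_congr fun j => ?_
  simp_rw [term_eq]
  rw [tsum_mul_left, Dt_pos, Dser, mul_assoc]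
  have h : (0:ℝ) ≤ j := by positivity
  simp; linarith

noncomputable def Tf : ℂ → ℂ := dslope Sf 0

lemma Sf_zero : Sf 0 = 0 := by simp [Sf]

lemma Sf_deriv : HasDerivAt Sf 2 0 := by
  unfold Sf
  have h1 : HasDerivAt (fun s : ℂ => (Real.pi:ℂ) * s) (Real.pi:ℂ) 0 := by
    simpa using (hasDerivAt_id (0:ℂ)).const_mul (Real.pi:ℂ)
  have h2 := ((h1.csin).const_mul 2).div_const (Real.pi:ℂ)
  refine h2.congr_deriv ?_
  have : (Real.pi:ℂ) ≠ 0 := by exact_mod_cast Real.pi_ne_zero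
  simp [this]

lemma Tf_diff : Differentiable ℂ Tf := by
  have := (Complex.differentiableOn_dslope (f := Sf) (s := univ) (c := 0) univ_mem).mpr Sf_diff.differentiableOn
  exact differentiableOn_univ.mp this

lemma Tf_zero : Tf 0 = 2 := by unfold Tf; rw [dslope_same, Sf_deriv.deriv]

lemma Tf_ne {s : ℂ} (hs : s ≠ 0) : Tf s = Sf s / s := by
  unfold Tf; rw [dslope_of_ne _ hs, slope_def_field, Sf_zero]; simp

lemma Tf_even (s : ℂ) : Tf (-s) = Tf s := by
  by_cases h : s = 0
  · simp [h]
  · rw [Tf_ne h, Tf_ne (neg_ne_zero.mpr h)]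
    unfold Sf
    rw [mul_neg, Complex.sin_neg]
    field_simp

lemma Tf_deriv : HasDerivAt Tf 0 0 := by
  have h := (Tf_diff 0).hasDerivAt
  have h2 : deriv Tf 0 = 0 := by
    have e : (fun s => Tf (-s)) = Tf := funext Tf_even
    have := deriv_comp_neg Tf (0:ℂ)
    rw [e, neg_zero] at this
    exact self_eq_neg.mp this
  rwa [h2] at h

noncomputable def Zf : ℂ → ℂ := Function.update (fun s => s * riemannZeta (2 * s + 1)) 0 (1/2)

lemma Zf_zero : Zf 0 = 1/2 := by simp [Zf]

lemma Zf_ne {s : ℂ} (hs : s ≠ 0) : Zf s = s * riemannZeta (2 * s + 1) := by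
  unfold Zf; rw [Function.update_of_ne hs]

lemma Zf_deriv : HasDerivAt Zf (Real.eulerMascheroniConstant : ℂ) 0 := by
  rw [hasDerivAt_iff_tendsto_slope]
  have h1 : Tendsto (fun s : ℂ => 2 * s + 1) (𝓝[≠] 0) (𝓝[≠] 1) := by
    refine tendsto_nhdsWithin_iff.mpr ⟨?_, ?_⟩
    · have : ContinuousAt (fun s : ℂ => 2 * s + 1) 0 := by fun_prop
      have := this.tendsto
      simp only [mul_zero, zero_add] at this
      exact this.mono_left nhdsWithin_le_nhds
    · filter_upwards [self_mem_nhdsWithin] with s hs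
      have : s ≠ 0 := hs
      simpa using this
  have h2 := tendsto_riemannZeta_sub_one_div.comp h1
  refine h2.congr' ?_
  filter_upwards [self_mem_nhdsWithin] with s hs
  have : s ≠ 0 := hs
  rw [slope_def_field, Zf_zero, Zf_ne this]
  simp only [Function.comp]
  field_simp
  ring

lemma Zf_analytic : AnalyticAt ℂ Zf 0 := by
  refine Complex.analyticAt_of_differentiable_on_punctured_nhds_of_continuousAt ?_ Zf_deriv.continuousAt
  filter_upwards [self_mem_nhdsWithin] with z hz
  have hz0 : z ≠ 0 := hz
  have : DifferentiableAt ℂ (fun s => s * riemannZeta (2 * s + 1)) z := by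
    refine differentiableAt_id.mul ?_
    refine DifferentiableAt.comp z (g := riemannZeta) (f := fun s : ℂ => 2 * s + 1) (differentiableAt_riemannZeta ?_) (by fun_prop)
    simpa using hz0
  refine this.congr_of_eventuallyEq ?_
  filter_upwards [isOpen_ne.mem_nhds hz0] with y hy
  exact Zf_ne hy

lemma Gamma_five_half : Complex.Gamma (5/2) = 3/4 * Complex.Gamma (1/2) := by
  have h1 := Complex.Gamma_add_one (3/2) (by norm_num)
  have h2 := Complex.Gamma_add_one (1/2) (by norm_num)
  norm_num at h1 h2 ⊢
  rw [h1, h2]; ring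

lemma Gamma_half_sqrt : Complex.Gamma (1/2) = (Real.sqrt Real.pi : ℝ) := by
  rw [← Real.Gamma_one_half_eq, ← Complex.Gamma_ofReal]; norm_num

lemma Gamma_half_ne : Complex.Gamma (1/2) ≠ 0 := by
  rw [Gamma_half_sqrt]
  exact_mod_cast (Real.sqrt_pos.mpr Real.pi_pos).ne'

lemma Gamma_two' : Complex.Gamma 2 = 1 := by
  have := Complex.Gamma_nat_eq_factorial 1
  rw [Nat.cast_one, one_add_one_eq_two] at this
  rw [this]; simp

lemma Mt_zero {η : ℝ} (hη : 0 < η) : Mt η 0 = -((Real.cosh η : ℝ):ℂ) / 12 := by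
  have hc : 0 < Real.sinh η := Real.sinh_pos_iff.mpr hη
  have hc' : ((Real.sinh η : ℝ):ℂ) ≠ 0 := by exact_mod_cast hc.ne'
  unfold Mt
  have e : (2 * (0:ℂ) - 4) = -((4:ℕ):ℂ) := by norm_num
  rw [e, Complex.cpow_neg, Complex.cpow_natCast, sub_zero, add_zero, Gamma_two', Gamma_five_half]
  have := Gamma_half_ne
  set g := Complex.Gamma (1/2)
  push_cast
  push_cast at hc'
  field_simp
  ring

lemma Mt_differentiableAt {η : ℝ} (hη : 0 < η) {τ : ℂ} (h0 : -(1/2) < τ.re) (h1 : τ.re < 2) :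
    DifferentiableAt ℂ (Mt η) τ := by
  have hc : 0 < Real.sinh η := Real.sinh_pos_iff.mpr hη
  have hc' : ((Real.sinh η : ℝ):ℂ) ≠ 0 := by exact_mod_cast hc.ne'
  unfold Mt
  refine DifferentiableAt.mul (DifferentiableAt.mul (by fun_prop) ?_) (DifferentiableAt.div_const (DifferentiableAt.mul ?_ ?_) _)
  · exact DifferentiableAt.const_cpow (by fun_prop) (Or.inl hc')
  · refine DifferentiableAt.comp τ (g := Complex.Gamma) (f := fun s : ℂ => 2 - s) (Complex.differentiableAt_Gamma _ ?_) (by fun_prop)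
    intro m h
    have := congrArg Complex.re h
    simp at this
    have := m.cast_nonneg (α := ℝ)
    linarith
  · refine DifferentiableAt.comp τ (g := Complex.Gamma) (f := fun s : ℂ => 1/2 + s) (Complex.differentiableAt_Gamma _ ?_) (by fun_prop)
    intro m h
    have := congrArg Complex.re h
    simp at this
    have := m.cast_nonneg (α := ℝ)
    linarith

lemma Mt_analytic {η : ℝ} (hη : 0 < η) : AnalyticAt ℂ (Mt η) 0 := by
  have ho : IsOpen {τ : ℂ | -(1/2) < τ.re ∧ τ.re < 2} :=
    (isOpen_lt continuous_const Complex.continuous_re).inter (isOpen_lt Complex.continuous_re continuous_const)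
  exact DifferentiableOn.analyticAt
    (fun z hz => (Mt_differentiableAt hη hz.1 hz.2).differentiableWithinAt) (ho.mem_nhds (by norm_num))

lemma Mt_deriv {η : ℝ} (hη : 0 < η) :
    HasDerivAt (Mt η) (Mt η 0 * (2 * (Real.log (Real.sinh η) : ℂ) - 1 - 2 * (Real.log 2 : ℂ))) 0 := by
  have hc : 0 < Real.sinh η := Real.sinh_pos_iff.mpr hη
  have hc' : ((Real.sinh η : ℝ):ℂ) ≠ 0 := by exact_mod_cast hc.ne'
  have g2 : HasDerivAt (fun τ : ℂ => Complex.Gamma (2 - τ)) (-(1 - (Real.eulerMascheroniConstant:ℂ))) 0 := by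
    have h := Complex.hasDerivAt_Gamma_nat 1
    have e : ((1:ℕ):ℂ) + 1 = 2 - 0 := by norm_num
    rw [e] at h
    have h3 := HasDerivAt.comp_const_sub (2:ℂ) (0:ℂ) h
    refine h3.congr_deriv ?_
    simp [harmonic]; ring
  have g1 : HasDerivAt (fun τ : ℂ => Complex.Gamma (1/2 + τ))
      (-Complex.Gamma (1/2) * ((Real.eulerMascheroniConstant:ℂ) + 2 * (Real.log 2 : ℂ))) 0 := by
    have h := Complex.hasDerivAt_Gamma_one_half
    rw [← add_zero (1/2:ℂ)] at h
    have h3 := HasDerivAt.comp_const_add (1/2:ℂ) (0:ℂ) h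
    refine h3.congr_deriv ?_
    rw [Gamma_half_sqrt]
    simp
  have g0 : HasDerivAt (fun τ : ℂ => ((Real.sinh η : ℝ) : ℂ) ^ (2 * τ - 4))
      (((Real.sinh η : ℝ) : ℂ) ^ (2 * (0:ℂ) - 4) * (Real.log (Real.sinh η) : ℂ) * 2) 0 := by
    have h1 : HasDerivAt (fun s : ℂ => 2 * s - 4) 2 0 := by
      simpa using ((hasDerivAt_id (0:ℂ)).const_mul 2).sub_const 4
    have := h1.const_cpow (c := ((Real.sinh η : ℝ) : ℂ)) (Or.inl hc')
    rwa [← Complex.ofReal_log hc.le] at this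
  have h := (g0.const_mul (-((Real.cosh η * Real.sinh η ^ 4 / 8 : ℝ) : ℂ) / 2)).mul
    ((g2.mul g1).div_const (Complex.Gamma (5/2)))
  refine h.congr_deriv ?_
  unfold Mt
  simp only [sub_zero, add_zero, Gamma_two', Pi.mul_apply]
  ring

lemma tail_zero (ω : ℕ) (η δ : ℝ) : tailJ ω η δ 1 0 = 0 := by
  unfold tailJ
  have : ∀ j : ℕ, pj (j+1) 0 = 0 := by
    intro j
    unfold pj pochSym
    rw [Finset.prod_range_succ']
    simp
  simp [this]

noncomputable def Gf (ω : ℕ) (η δ : ℝ) (s : ℂ) : ℂ :=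
  Tf s * Zf s * ((ω:ℂ)^(-(2*s+1)) * Mt η s) + Sf s * (tailJ ω η δ 1 s - Em ω η δ 0 s)

noncomputable def Ff (ω : ℕ) (δ η : ℝ) : ℂ → ℂ :=
  Function.update (OmT ω η δ) 0 (-((Real.cosh η : ℝ):ℂ) / (12 * ω))

lemma Gf_zero {ω : ℕ} {η δ : ℝ} (hη : 0 < η) : Gf ω η δ 0 = -((Real.cosh η : ℝ):ℂ) / (12 * ω) := by
  unfold Gf
  rw [Tf_zero, Zf_zero, Sf_zero, Mt_zero hη, mul_zero, zero_add, Complex.cpow_neg_one]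
  ring

lemma zero_mem_UM : (0:ℂ) ∈ UM 0 := by simp [UM]
lemma zero_mem_WJ : (0:ℂ) ∈ WJ 1 1 := by simp [WJ]; norm_num

lemma Ff_eq_Gf {ω : ℕ} (hω : 1 ≤ ω) {η : ℝ} (hη : 0 < η) {δ : ℝ} (hδ : 0 < δ) (hδ1 : δ < 1/8) :
    Ff ω δ η =ᶠ[𝓝 0] Gf ω η δ := by
  filter_upwards [(UM_open 0).mem_nhds zero_mem_UM, (WJ_open 1 1).mem_nhds zero_mem_WJ] with s h1 h2
  by_cases hs : s = 0
  · subst hs; rw [Gf_zero hη]; simp [Ff]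
  · unfold Ff
    rw [Function.update_of_ne hs, OmT_split hω hη hδ one_pos h2]
    simp only [Finset.range_one, Finset.sum_singleton, Nat.cast_zero, add_zero]
    rw [Dt_eq hω hη hδ hδ1 h1]
    unfold Gf Dm
    rw [Tf_ne hs, Zf_ne hs]
    have : pj 0 s = 1 := by simp [pj, pochSym]
    rw [this]
    simp only [Finset.range_zero, Finset.sum_empty]
    field_simp
    ring

lemma Gf_analytic {ω : ℕ} (hω : 1 ≤ ω) {η : ℝ} (hη : 0 < η) {δ : ℝ} (hδ : 0 < δ) (hδ1 : δ < 1/8) :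
    AnalyticAt ℂ (Gf ω η δ) 0 := by
  have hw : (ω:ℂ) ≠ 0 := by exact_mod_cast (by omega : ω ≠ 0)
  have hc : AnalyticAt ℂ (fun s : ℂ => (ω:ℂ)^(-(2*s+1))) 0 := by
    refine Differentiable.analyticAt (fun s => ?_) 0
    exact DifferentiableAt.const_cpow (by fun_prop) (Or.inl hw)
  exact (((Tf_diff.analyticAt 0).mul Zf_analytic).mul (hc.mul (Mt_analytic hη))).add
    ((Sf_diff.analyticAt 0).mul ((tailJ_analyticAt hω hη hδ one_pos zero_mem_WJ).sub
      (Em_analyticAt hω η hδ hδ1 zero_mem_UM)))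

lemma Ff_deriv {ω : ℕ} (hω : 1 ≤ ω) {η : ℝ} (hη : 0 < η) {δ : ℝ} (hδ : 0 < δ) (hδ1 : δ < 1/8) :
    deriv (Ff ω δ η) 0 = -((Real.cosh η : ℝ):ℂ) / (6 * ω) * ((Real.eulerMascheroniConstant:ℂ) - (Real.log ω : ℂ)
      + (Real.log (Real.sinh η) : ℂ) - 1/2 - (Real.log 2 : ℂ)) - 2 * Em ω η δ 0 0 := by
  have hw : (ω:ℂ) ≠ 0 := by exact_mod_cast (by omega : ω ≠ 0)
  rw [(Ff_eq_Gf hω hη hδ hδ1).deriv_eq]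
  have hc : HasDerivAt (fun s : ℂ => (ω:ℂ)^(-(2*s+1))) ((ω:ℂ)^(-(2*(0:ℂ)+1)) * (Real.log ω : ℂ) * (-2)) 0 := by
    have h1 : HasDerivAt (fun s : ℂ => -(2 * s + 1)) (-2) 0 := by
      simpa using (((hasDerivAt_id (0:ℂ)).const_mul 2).add_const 1).fun_neg
    have := h1.const_cpow (c := (ω:ℂ)) (Or.inl hw)
    have e : (Real.log ω : ℂ) = Complex.log ω := by
      rw [Complex.ofReal_log (Nat.cast_nonneg _), Complex.ofReal_natCast]
    rwa [← e] at this
  have ht := ((tailJ_analyticAt hω hη hδ one_pos zero_mem_WJ).sub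
      (Em_analyticAt hω η hδ hδ1 zero_mem_UM)).differentiableAt.hasDerivAt
  have h := ((Tf_deriv.mul Zf_deriv).mul (hc.mul (Mt_deriv hη))).add (Sf_deriv.mul ht)
  refine (h.deriv).trans ?_
  simp only [Pi.mul_apply, Pi.sub_apply, Tf_zero, Zf_zero, Sf_zero, tail_zero, Mt_zero hη, mul_zero, zero_add, Complex.cpow_neg_one]
  field_simp
  ring

lemma lim_log_a : Tendsto (fun η : ℝ => (Real.cosh η - 1) * Real.log (Real.sinh η)) (𝓝[>] 0) (𝓝 0) := by
  have e : (fun η : ℝ => (Real.cosh η - 1) * Real.log (Real.sinh η))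
      = fun η => Real.sinh η * (Real.sinh η * Real.log (Real.sinh η)) / (Real.cosh η + 1) := by
    ext η
    have h := Real.cosh_sq η
    have h1 : Real.cosh η + 1 ≠ 0 := by have := Real.cosh_pos η; positivity
    rw [eq_div_iff h1]
    linear_combination Real.log (Real.sinh η) * h
  rw [e]
  have hc : Continuous fun η => Real.sinh η * (Real.sinh η * Real.log (Real.sinh η)) / (Real.cosh η + 1) := by
    refine Continuous.div (Real.continuous_sinh.mul (Real.continuous_mul_log.comp Real.continuous_sinh))
      (Real.continuous_cosh.add continuous_const) fun η => ?_
    have := Real.cosh_pos η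
    positivity
  have := hc.tendsto 0
  simp only [Real.sinh_zero, zero_mul, zero_div] at this
  exact this.mono_left nhdsWithin_le_nhds

lemma lim_log_b : Tendsto (fun η : ℝ => Real.log η - Real.log (Real.sinh η)) (𝓝[>] 0) (𝓝 0) := by
  have h := (hasDerivAt_iff_tendsto_slope.mp (Real.hasDerivAt_sinh 0)).mono_left
    (nhdsWithin_mono (0:ℝ) (fun x (hx : 0 < x) => hx.ne'))
  rw [Real.cosh_zero] at h
  have h2 := ((Real.continuousAt_log one_ne_zero).tendsto.comp h).neg
  rw [Real.log_one, neg_zero] at h2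
  refine h2.congr' ?_
  filter_upwards [self_mem_nhdsWithin] with x hx
  have hx' : (0:ℝ) < x := hx
  have hs : 0 < Real.sinh x := Real.sinh_pos_iff.mpr hx'
  simp only [Function.comp, slope_def_field, Real.sinh_zero, sub_zero]
  rw [Real.log_div hs.ne' hx'.ne']
  ring

lemma lim_Em {ω : ℕ} (hω : 1 ≤ ω) {δ : ℝ} (hδ : 0 < δ) (hδ1 : δ < 1/8) :
    Tendsto (fun η : ℝ => Em ω η δ 0 0) (𝓝[>] 0) (𝓝 0) := by
  set S : ℝ := ∑' k : ℕ, ((k+1:ℕ):ℝ)^(-(1+2*(1/2:ℝ))) with hS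
  have hsum := summable_k (1/2) (by norm_num)
  have hb : ∀ η : ℝ, 0 < η → ‖Em ω η δ 0 0‖ ≤ (Real.cosh η * Real.sinh η^4/8) * S := by
    intro η hη
    have hc := Real.cosh_pos η
    unfold Em
    refine tsum_of_norm_bounded (hsum.hasSum.mul_left _) fun k => ?_
    refine eT_bound hω hδ hδ1 (by positivity) (fun u hu _ => ?_) (by omega) zero_mem_UM
    rw [fM_zero]
    simpa using coneA2_bound_zero η hu.le
  refine squeeze_zero_norm' (a := fun η => (Real.cosh η * Real.sinh η^4/8) * S) ?_ ?_
  · filter_upwards [self_mem_nhdsWithin] with η hη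
    exact hb η hη
  · have hc : Continuous fun η => (Real.cosh η * Real.sinh η^4/8) * S := by fun_prop
    have := hc.tendsto 0
    simp only [Real.sinh_zero] at this
    norm_num at this
    exact this.mono_left nhdsWithin_le_nhds

lemma lim_cosh : Tendsto (fun η : ℝ => ((Real.cosh η : ℝ):ℂ)) (𝓝[>] 0) (𝓝 1) := by
  have hc : Continuous fun η : ℝ => ((Real.cosh η : ℝ):ℂ) := Complex.continuous_ofReal.comp Real.continuous_cosh
  have := hc.tendsto 0
  simp only [Real.cosh_zero, Complex.ofReal_one] at this
  exact this.mono_left nhdsWithin_le_nhds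

lemma lim_main {ω : ℕ} (hω : 1 ≤ ω) {δ : ℝ} (hδ : 0 < δ) (hδ1 : δ < 1/8) :
    Tendsto
        (fun η : ℝ => deriv (Ff ω δ η) 0 -
          (-(Real.eulerMascheroniConstant : ℂ) / (6 * (ω : ℂ)) + 1 / (12 * (ω : ℂ)) +
            (Real.log 2 : ℂ) / (6 * (ω : ℂ)) + (Real.log ω : ℂ) / (6 * (ω : ℂ)) -
            (Real.log η : ℂ) / (6 * (ω : ℂ))))
        (nhdsWithin 0 (Set.Ioi 0)) (nhds 0) := by
  have hw : (ω:ℂ) ≠ 0 := by exact_mod_cast (by omega : ω ≠ 0)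
  have ha : Tendsto (fun η : ℝ => (((Real.cosh η - 1) * Real.log (Real.sinh η) : ℝ) : ℂ)) (𝓝[>] 0) (𝓝 0) := by
    have := (Complex.continuous_ofReal.tendsto 0).comp lim_log_a
    rw [Complex.ofReal_zero] at this
    exact this
  have hb : Tendsto (fun η : ℝ => ((Real.log η - Real.log (Real.sinh η) : ℝ) : ℂ)) (𝓝[>] 0) (𝓝 0) := by
    have := (Complex.continuous_ofReal.tendsto 0).comp lim_log_b
    rw [Complex.ofReal_zero] at this
    exact this
  set C : ℂ := (Real.eulerMascheroniConstant:ℂ) - (Real.log ω : ℂ) - 1/2 - (Real.log 2 : ℂ) with hC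
  have h := (((((tendsto_const_nhds (x := (1:ℂ))).sub lim_cosh).mul_const C).add (hb.sub ha)).const_mul
    (1 / (6 * (ω:ℂ)))).sub ((lim_Em hω hδ hδ1).const_mul 2)
  simp only [sub_self, zero_mul, add_zero, mul_zero] at h
  refine h.congr' ?_
  filter_upwards [self_mem_nhdsWithin] with η hη
  rw [Ff_deriv hω hη hδ hδ1, hC]
  rw [Complex.ofReal_mul, Complex.ofReal_sub, Complex.ofReal_sub, Complex.ofReal_one]
  field_simp
  ring

end Proof

/-- for fixed integer `ω ≥ 1` and `δ ∈ (0,1/8)`, for every `η > 0` the double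
series `Ω₂(s)` converges absolutely and locally uniformly on the strip `1 < Re(s) < 2`, and its
sum extends to a meromorphic function on `ℂ` holomorphic at (a neighborhood of) `s = 0`;
moreover, as `η → 0⁺`, `Ω₂(0) → -1/(12ω)` and
`Ω₂'(0) - (-γ/(6ω) + 1/(12ω) + log 2/(6ω) + log ω/(6ω) - log η/(6ω)) → 0`. -/
theorem statement13 (ω : ℕ) (hω : 1 ≤ ω) (δ : ℝ) (hδ0 : 0 < δ) (hδ1 : δ < 1 / 8) :
    ∃ F : ℝ → ℂ → ℂ,
      (∀ η : ℝ, 0 < η →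
        (∀ s ∈ {s : ℂ | 1 < s.re ∧ s.re < 2},
          Summable (fun p : ℕ × ℕ => ‖Omega2Term ω η δ (p.1 + 1) p.2 s‖)) ∧
        TendstoLocallyUniformlyOn
          (fun (N : Finset (ℕ × ℕ)) (s : ℂ) => ∑ p ∈ N, Omega2Term ω η δ (p.1 + 1) p.2 s)
          (fun s : ℂ => ∑' p : ℕ × ℕ, Omega2Term ω η δ (p.1 + 1) p.2 s)
          atTop {s : ℂ | 1 < s.re ∧ s.re < 2} ∧
        MeromorphicOn (F η) Set.univ ∧
        Set.EqOn (F η) (fun s : ℂ => ∑' p : ℕ × ℕ, Omega2Term ω η δ (p.1 + 1) p.2 s)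
          {s : ℂ | 1 < s.re ∧ s.re < 2} ∧
        AnalyticAt ℂ (F η) 0) ∧
      Tendsto (fun η : ℝ => F η 0) (nhdsWithin 0 (Set.Ioi 0))
        (nhds (-(1 / (12 * (ω : ℂ))))) ∧
      Tendsto
        (fun η : ℝ => deriv (F η) 0 -
          (-(Real.eulerMascheroniConstant : ℂ) / (6 * (ω : ℂ)) + 1 / (12 * (ω : ℂ)) +
            (Real.log 2 : ℂ) / (6 * (ω : ℂ)) + (Real.log ω : ℂ) / (6 * (ω : ℂ)) -
            (Real.log η : ℂ) / (6 * (ω : ℂ))))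
        (nhdsWithin 0 (Set.Ioi 0)) (nhds 0) := by
  refine ⟨Ff ω δ, fun η hη => ⟨fun s hs => strip_summable hω hη hδ0 hs.1, strip_unif hω hη hδ0, ?_, ?_, ?_⟩, ?_,
    lim_main hω hδ0 hδ1⟩
  · intro z _
    exact (OmT_meromorphic hω hη hδ0 hδ1 z).update _ _
  · intro s hs
    have hs0 : s ≠ 0 := by
      rintro rfl
      have := hs.1
      norm_num at this
    unfold Ff
    rw [Function.update_of_ne hs0]
    exact strip_eq hω hη hδ0 hs.1
  · exact (Gf_analytic hω hη hδ0 hδ1).congr (Ff_eq_Gf hω hη hδ0 hδ1).symm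
  · have h := lim_cosh.neg.div_const (12 * (ω:ℂ))
    rw [← neg_div]
    refine h.congr fun η => ?_
    simp [Ff]
end

section
/- For every w ∈ ℂ with Re(w) > 1, one has ∫₁^{∞} (log(u) - log(u+1)) · u^{-w} du = -log(2)/(w-1) + (ψ((w+1)/2) - ψ(w/2))/(2(w-1)). -/
open MeasureTheory Filter

/-- The digamma function `ψ(z) = Γ'(z)/Γ(z)`. -/
noncomputable def digamma (z : ℂ) : ℂ := deriv Complex.Gamma z / Complex.Gamma z

open Topology in
lemma gamma_quot_hasDerivAt (a : ℂ) (ha : 0 < a.re) :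
    HasDerivAt (fun z : ℂ => Complex.Gamma a / Complex.Gamma (a + z)) (-digamma a) 0 := by
  have hne : Complex.Gamma a ≠ 0 := Complex.Gamma_ne_zero_of_re_pos ha
  have h1 : HasDerivAt Complex.Gamma (deriv Complex.Gamma a) (a + 0) := by
    rw [add_zero]
    refine (Complex.differentiableAt_Gamma a ?_).hasDerivAt
    intro m h
    rw [h] at ha
    simp at ha
    linarith [(Nat.cast_nonneg m : (0:ℝ) ≤ m)]
  have h2 : HasDerivAt (fun z : ℂ => Complex.Gamma (a + z)) (deriv Complex.Gamma a) 0 :=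
    h1.comp_const_add a 0
  have h3 := (hasDerivAt_const (0 : ℂ) (Complex.Gamma a)).div h2 (by simpa using hne)
  refine h3.congr_deriv ?_
  simp only [add_zero, digamma]
  field_simp
  ring

lemma tendsto_ofReal_ne :
    Tendsto (fun h : ℝ => (h : ℂ)) (nhdsWithin 0 (Set.Ioi 0)) (nhdsWithin 0 {0}ᶜ) := by
  refine tendsto_nhdsWithin_iff.2 ⟨?_, ?_⟩
  · have : Tendsto (fun h : ℝ => (h : ℂ)) (nhds 0) (nhds ((0 : ℝ) : ℂ)) :=
      Complex.continuous_ofReal.tendsto 0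
    simpa using this.mono_left nhdsWithin_le_nhds
  · filter_upwards [self_mem_nhdsWithin] with h hh
    simpa using (ne_of_gt hh)

lemma beta_diff_tendsto (a b : ℂ) (ha : 0 < a.re) (hb : 0 < b.re) :
    Tendsto (fun h : ℝ => Complex.betaIntegral a h - Complex.betaIntegral b h)
      (nhdsWithin 0 (Set.Ioi 0)) (nhds (digamma b - digamma a)) := by
  have h1 := ((gamma_quot_hasDerivAt a ha).sub (gamma_quot_hasDerivAt b hb)).tendsto_slope
  have h2 := (Complex.tendsto_self_mul_Gamma_nhds_zero.mul h1).comp tendsto_ofReal_ne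
  have e : 1 * (-digamma a - -digamma b) = digamma b - digamma a := by ring
  rw [e] at h2
  refine h2.congr' ?_
  filter_upwards [self_mem_nhdsWithin] with h hh
  have hh : 0 < h := hh
  have hc : (h : ℂ) ≠ 0 := by exact_mod_cast hh.ne'
  rw [Complex.betaIntegral_eq_Gamma_mul_div _ _ ha (by simpa using hh),
    Complex.betaIntegral_eq_Gamma_mul_div _ _ hb (by simpa using hh)]
  have hna := Complex.Gamma_ne_zero_of_re_pos ha
  have hnb := Complex.Gamma_ne_zero_of_re_pos hb
  simp only [Function.comp, slope_def_field, Pi.sub_apply, add_zero, div_self hna, div_self hnb]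
  field_simp
  ring

lemma beta_diff_eq (a : ℂ) (ha : 0 < a.re) (h : ℝ) (hh : 0 < h) :
    Complex.betaIntegral a h - Complex.betaIntegral (a + 1 / 2) h =
      ∫ t in Set.Ioo (0 : ℝ) 1, (t : ℂ) ^ (a - 1) * (((1 - t) ^ h / (1 + √t) : ℝ) : ℂ) := by
  have hb : 0 < (a + 1 / 2).re := by
    simp; linarith
  have hh' : 0 < (h : ℂ).re := by simpa using hh
  unfold Complex.betaIntegral
  rw [← intervalIntegral.integral_sub (Complex.betaIntegral_convergent ha hh')
    (Complex.betaIntegral_convergent hb hh'),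
    intervalIntegral.integral_of_le zero_le_one, integral_Ioc_eq_integral_Ioo]
  refine setIntegral_congr_fun measurableSet_Ioo ?_
  intro t ht
  have h0 : 0 < t := ht.1
  have h1 : 0 < 1 - t := by linarith [ht.2]
  have e1 : (t : ℂ) ^ (a + 1 / 2 - 1) = (t : ℂ) ^ (a - 1) * ((√t : ℝ) : ℂ) := by
    rw [Real.sqrt_eq_rpow, Complex.ofReal_cpow h0.le, ← Complex.cpow_add _ _ (by exact_mod_cast h0.ne')]
    congr 1
    push_cast
    ring
  have e2 : (1 - (t : ℂ)) ^ ((h : ℂ) - 1) = (((1 - t) ^ h / (1 - t) : ℝ) : ℂ) := by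
    rw [← Real.rpow_sub_one h1.ne', Complex.ofReal_cpow h1.le]
    push_cast
    rfl
  have e3 : (1 - t) ^ h / (1 + √t) = (1 - √t) * ((1 - t) ^ h / (1 - t)) := by
    have hs : 0 ≤ √t := Real.sqrt_nonneg t
    have hq : √t * √t = t := Real.mul_self_sqrt h0.le
    have hp : 1 + √t ≠ 0 := by positivity
    field_simp
    linear_combination hq
  simp only
  rw [e1, e2, e3]
  push_cast
  ring

lemma integrable_cpow_Ioo (a : ℂ) (ha : 0 < a.re) :
    IntegrableOn (fun t : ℝ => (t : ℂ) ^ (a - 1)) (Set.Ioo 0 1) := by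
  have := intervalIntegral.intervalIntegrable_cpow' (a := 0) (b := 1) (r := a - 1) (by simpa using ha)
  rw [intervalIntegrable_iff_integrableOn_Ioo_of_le zero_le_one] at this
  exact this

lemma digamma_diff (a : ℂ) (ha : 0 < a.re) :
    digamma (a + 1 / 2) - digamma a =
      ∫ t in Set.Ioo (0 : ℝ) 1, (t : ℂ) ^ (a - 1) * ((1 / (1 + √t) : ℝ) : ℂ) := by
  have hb : 0 < (a + 1 / 2).re := by
    simp; linarith
  refine tendsto_nhds_unique (beta_diff_tendsto a _ ha hb) ?_
  have key : Tendsto (fun h : ℝ => ∫ t in Set.Ioo (0 : ℝ) 1,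
      (t : ℂ) ^ (a - 1) * (((1 - t) ^ h / (1 + √t) : ℝ) : ℂ)) (nhdsWithin 0 (Set.Ioi 0))
      (nhds (∫ t in Set.Ioo (0 : ℝ) 1, (t : ℂ) ^ (a - 1) * ((1 / (1 + √t) : ℝ) : ℂ))) := by
    refine tendsto_integral_filter_of_dominated_convergence
      (fun t : ℝ => ‖(t : ℂ) ^ (a - 1)‖) ?_ ?_ (integrable_cpow_Ioo a ha).norm ?_
    · refine Eventually.of_forall fun h => ?_
      refine (integrable_cpow_Ioo a ha).aestronglyMeasurable.mul ?_
      refine Measurable.aestronglyMeasurable ?_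
      fun_prop
    · filter_upwards [self_mem_nhdsWithin] with h hh
      have hh : 0 < h := hh
      filter_upwards [ae_restrict_mem measurableSet_Ioo] with t ht
      rw [norm_mul]
      refine mul_le_of_le_one_right (norm_nonneg _) ?_
      have h1 : 0 ≤ 1 - t := by linarith [ht.2]
      have hs : 0 ≤ √t := Real.sqrt_nonneg t
      have hp : 0 ≤ (1 - t) ^ h := Real.rpow_nonneg h1 h
      rw [Complex.norm_real, Real.norm_of_nonneg (by positivity), div_le_one (by positivity)]
      have := Real.rpow_le_one h1 (by linarith [ht.1]) hh.le
      linarith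
    · filter_upwards [ae_restrict_mem measurableSet_Ioo] with t ht
      have h1 : 0 < 1 - t := by linarith [ht.2]
      refine Tendsto.const_mul _ ?_
      refine (Complex.continuous_ofReal.tendsto _).comp ?_
      refine Tendsto.div_const ?_ _
      have : Tendsto (fun h : ℝ => (1 - t) ^ h) (nhds 0) (nhds ((1 - t) ^ (0 : ℝ))) :=
        (Real.continuous_const_rpow h1.ne').tendsto 0
      rw [Real.rpow_zero] at this
      exact this.mono_left nhdsWithin_le_nhds
  refine key.congr' ?_
  filter_upwards [self_mem_nhdsWithin] with h hh
  exact (beta_diff_eq a ha h hh).symm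

lemma image_sq_inv : (fun u : ℝ => (u ^ 2)⁻¹) '' Set.Ioi 1 = Set.Ioo 0 1 := by
  ext t
  constructor
  · rintro ⟨u, hu, rfl⟩
    have hu : 1 < u := hu
    exact ⟨by positivity, inv_lt_one_of_one_lt₀ (by nlinarith)⟩
  · rintro ⟨h0, h1⟩
    have hs : 0 < √t := Real.sqrt_pos.2 h0
    refine ⟨(√t)⁻¹, ?_, ?_⟩
    · refine (one_lt_inv₀ hs).2 ?_
      rw [Real.sqrt_lt' one_pos]; simpa using h1
    · simp [Real.sq_sqrt h0.le]

lemma digamma_diff' (w : ℂ) (hw : 0 < w.re) :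
    digamma ((w + 1) / 2) - digamma (w / 2) =
      2 * ∫ u in Set.Ioi (1 : ℝ), (u : ℂ) ^ (-w) * ((1 / (u + 1) : ℝ) : ℂ) := by
  have e : (w + 1) / 2 = w / 2 + 1 / 2 := by ring
  have ha : 0 < (w / 2).re := by
    have : (w / 2).re = w.re / 2 := by simp
    rw [this]; linarith
  rw [e, digamma_diff _ ha, ← image_sq_inv,
    integral_image_eq_integral_abs_deriv_smul (f' := fun u : ℝ => -(2 * u) / (u ^ 2) ^ 2)
      measurableSet_Ioi, ← integral_const_mul]
  · refine setIntegral_congr_fun measurableSet_Ioi ?_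
    intro u hu
    have hu : 1 < u := hu
    have h0 : 0 < u := by linarith
    have hc : (u : ℂ) ≠ 0 := by exact_mod_cast h0.ne'
    have hc1 : (u : ℂ) + 1 ≠ 0 := by
      have : (u + 1 : ℝ) ≠ 0 := by positivity
      exact_mod_cast this
    have e1 : (((u ^ 2)⁻¹ : ℝ) : ℂ) ^ (w / 2 - 1) = (u : ℂ) ^ (-w) * (u : ℂ) ^ 2 := by
      have : (u ^ 2)⁻¹ = u ^ (-2 : ℝ) := by
        rw [Real.rpow_neg h0.le]; norm_cast
      rw [this, ← Complex.cpow_ofNat, ← Complex.cpow_add _ _ hc,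
        Complex.cpow_def_of_ne_zero hc, Complex.cpow_def_of_ne_zero
          (Complex.ofReal_ne_zero.2 (Real.rpow_pos_of_pos h0 _).ne'),
        ← Complex.ofReal_log (Real.rpow_pos_of_pos h0 _).le, Real.log_rpow h0,
        ← Complex.ofReal_log h0.le]
      congr 1
      push_cast
      ring
    have e2 : √((u ^ 2)⁻¹) = u⁻¹ := by
      rw [Real.sqrt_inv, Real.sqrt_sq h0.le]
    have e3 : |-(2 * u) / (u ^ 2) ^ 2| = 2 / u ^ 3 := by
      rw [neg_div, abs_neg, abs_of_pos (by positivity)]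
      field_simp
    simp only
    rw [e1, e2, e3, Complex.real_smul]
    push_cast
    field_simp
  · intro u hu
    have hu : 1 < u := hu
    have h0 : u ^ 2 ≠ 0 := by positivity
    have := ((hasDerivAt_pow 2 u).inv h0).hasDerivWithinAt (s := Set.Ioi 1)
    refine HasDerivWithinAt.congr_deriv this ?_
    norm_num
  · intro u hu v hv huv
    have hu : 1 < u := hu
    have hv : 1 < v := hv
    have := inv_injective huv
    exact (pow_left_inj₀ (by linarith) (by linarith) two_ne_zero).1 this

/-- for every `w ∈ ℂ` with `Re(w) > 1`,
`∫₁^∞ (log u - log(u+1))·u^{-w} du = -log 2/(w-1) + (ψ((w+1)/2) - ψ(w/2))/(2(w-1))`. -/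
theorem statement14 (w : ℂ) (hw : 1 < w.re) :
    ∫ u in Set.Ioi (1 : ℝ),
        ((Real.log u - Real.log (u + 1) : ℝ) : ℂ) * (u : ℂ) ^ (-w) =
      -(Real.log 2 : ℂ) / (w - 1) + (digamma ((w + 1) / 2) - digamma (w / 2)) / (2 * (w - 1)) := by
  have hw1 : w - 1 ≠ 0 := by
    intro h
    have := congrArg Complex.re h
    simp at this
    linarith
  have hw2 : -w + 1 ≠ 0 := by
    intro h; apply hw1; linear_combination -h
  have hint : IntegrableOn (fun u : ℝ => (u : ℂ) ^ (-w)) (Set.Ioi 1) :=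
    integrableOn_Ioi_cpow_of_lt (by simpa using hw) one_pos
  have hu : ∀ x ∈ Set.Ici (1 : ℝ), HasDerivAt
      (fun u : ℝ => ((Real.log u - Real.log (u + 1) : ℝ) : ℂ)) ((1 / x - 1 / (x + 1) : ℝ) : ℂ) x := by
    intro x hx
    have hx : 1 ≤ x := hx
    refine HasDerivAt.ofReal_comp ?_
    have h1 := (hasDerivAt_id x).log (by simp; linarith)
    have h2 := ((hasDerivAt_id x).add_const 1).log (by simp; linarith)
    exact h1.sub h2
  have hv : ∀ x ∈ Set.Ici (1 : ℝ), HasDerivAt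
      (fun u : ℝ => (u : ℂ) ^ (-w + 1) / (-w + 1)) ((x : ℂ) ^ (-w)) x := by
    intro x hx
    have hx : 1 ≤ x := hx
    refine hasDerivAt_ofReal_cpow_const' (by linarith) ?_
    intro h; apply hw2; rw [h]; ring
  have hprod : ∀ x ∈ Set.Ioi (1 : ℝ), ((1 / x - 1 / (x + 1) : ℝ) : ℂ) * ((x : ℂ) ^ (-w + 1) / (-w + 1))
      = (-w + 1)⁻¹ * ((x : ℂ) ^ (-w) * ((1 / (x + 1) : ℝ) : ℂ)) := by
    intro x hx
    have hx : 1 < x := hx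
    have hc : (x : ℂ) ≠ 0 := by
      have : x ≠ 0 := by linarith
      exact_mod_cast this
    have hc1 : (x : ℂ) + 1 ≠ 0 := by
      have : (x + 1 : ℝ) ≠ 0 := by linarith
      exact_mod_cast this
    rw [Complex.cpow_add _ _ hc, Complex.cpow_one]
    push_cast
    field_simp
    ring
  have hint2 : IntegrableOn (fun x : ℝ => (x : ℂ) ^ (-w) * ((1 / (x + 1) : ℝ) : ℂ)) (Set.Ioi 1) := by
    refine hint.mul_bdd (c := 1) ?_ ?_
    · refine Measurable.aestronglyMeasurable ?_
      fun_prop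
    · filter_upwards [ae_restrict_mem measurableSet_Ioi] with x hx
      have hx : 1 < x := hx
      rw [Complex.norm_real, Real.norm_of_nonneg (by positivity), div_le_one (by positivity)]
      linarith
  have hint3 : IntegrableOn (fun x : ℝ => ((Real.log x - Real.log (x + 1) : ℝ) : ℂ) * (x : ℂ) ^ (-w))
      (Set.Ioi 1) := by
    refine hint.bdd_mul (c := Real.log 2) ?_ ?_
    · refine Measurable.aestronglyMeasurable ?_
      fun_prop
    · filter_upwards [ae_restrict_mem measurableSet_Ioi] with x hx
      have hx : 1 < x := hx
      have h1 : Real.log x ≤ Real.log (x + 1) := Real.log_le_log (by linarith) (by linarith)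
      have h2 : Real.log (x + 1) ≤ Real.log (2 * x) := Real.log_le_log (by linarith) (by linarith)
      rw [Real.log_mul two_ne_zero (by linarith)] at h2
      rw [Complex.norm_real, Real.norm_eq_abs, abs_le]
      constructor <;> linarith [Real.log_pos one_lt_two]
  have hzero : Tendsto ((fun u : ℝ => ((Real.log u - Real.log (u + 1) : ℝ) : ℂ)) *
      (fun u : ℝ => (u : ℂ) ^ (-w + 1) / (-w + 1))) (nhdsWithin 1 (Set.Ioi 1))
      (nhds (-(Real.log 2 : ℂ) / (-w + 1))) := by
    have h := ((hu 1 Set.self_mem_Ici).continuousAt.mul (hv 1 Set.self_mem_Ici).continuousAt).tendsto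
    have e : ((Real.log 1 - Real.log (1 + 1) : ℝ) : ℂ) * (((1 : ℝ) : ℂ) ^ (-w + 1) / (-w + 1))
        = -(Real.log 2 : ℂ) / (-w + 1) := by
      norm_num
      ring
    rw [← e]
    exact h.mono_left nhdsWithin_le_nhds
  have hinf : Tendsto ((fun u : ℝ => ((Real.log u - Real.log (u + 1) : ℝ) : ℂ)) *
      (fun u : ℝ => (u : ℂ) ^ (-w + 1) / (-w + 1))) atTop (nhds 0) := by
    have h1 : Tendsto (fun u : ℝ => ((Real.log u - Real.log (u + 1) : ℝ) : ℂ)) atTop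
        (nhds ((-0 : ℝ) : ℂ)) := by
      refine (Complex.continuous_ofReal.tendsto _).comp ?_
      refine (Real.tendsto_log_comp_add_sub_log 1).neg.congr ?_
      intro x; ring
    have h2 : Tendsto (fun u : ℝ => (u : ℂ) ^ (-w + 1) / (-w + 1)) atTop (nhds (0 / (-w + 1))) := by
      refine Tendsto.div_const ?_ _
      rw [tendsto_zero_iff_norm_tendsto_zero]
      refine (tendsto_rpow_neg_atTop (y := w.re - 1) (by linarith)).congr' ?_
      filter_upwards [eventually_gt_atTop 0] with x hx
      rw [Complex.norm_cpow_eq_rpow_re_of_pos hx]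
      congr 1
      simp
      ring
    have h3 := h1.mul h2
    have e : ((-0 : ℝ) : ℂ) * (0 / (-w + 1)) = 0 := by simp
    rw [e] at h3
    exact h3
  have hint4 : IntegrableOn ((fun x : ℝ => ((1 / x - 1 / (x + 1) : ℝ) : ℂ)) *
      (fun u : ℝ => (u : ℂ) ^ (-w + 1) / (-w + 1))) (Set.Ioi 1) := by
    refine (integrableOn_congr_fun ?_ measurableSet_Ioi).2 (hint2.const_mul (-w + 1)⁻¹)
    intro x hx
    exact hprod x hx
  rw [integral_Ioi_mul_deriv_eq_deriv_mul
    (fun x hx => hu x (Set.Ioi_subset_Ici_self hx)) (fun x hx => hv x (Set.Ioi_subset_Ici_self hx))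
    hint3 hint4 hzero hinf, setIntegral_congr_fun measurableSet_Ioi hprod, integral_const_mul,
    digamma_diff' w (by linarith)]
  have e : -w + 1 = -(w - 1) := by ring
  rw [e]
  field_simp
  ring
end

section
/- For every real β > 0 and every σ ∈ ℂ with 1/2 < Re(σ) < 1, one has ∫₀^{∞} u^{-2σ} · arsinh(u/β) du = β^{1-2σ} · Γ(1-σ)·Γ(σ - 1/2)/(2(2σ-1)·√π). -/
open MeasureTheory Filter

lemma aux_cpow {x : ℝ} (hx : 0 < x) (a : ℂ) :
    (x : ℂ) ^ a = Complex.exp ((Real.log x : ℂ) * a) := by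
  rw [Complex.cpow_def_of_ne_zero (by exact_mod_cast hx.ne'), Complex.ofReal_log hx.le]

lemma aux_pt (σ : ℂ) {u : ℝ} (hu : 0 < u) :
    |2 * u / (1 + u ^ 2) ^ 2| • (((u ^ 2 / (1 + u ^ 2) : ℝ) : ℂ) ^ (1 - σ - 1) *
      (1 - ((u ^ 2 / (1 + u ^ 2) : ℝ) : ℂ)) ^ (σ - 1 / 2 - 1)) =
    2 * ((((Real.sqrt (1 + u ^ 2))⁻¹ : ℝ) : ℂ) * (u : ℂ) ^ (1 - 2 * σ)) := by
  have hw : 0 < 1 + u ^ 2 := by positivity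
  have h1 : (1 - ((u ^ 2 / (1 + u ^ 2) : ℝ) : ℂ)) = (((1 + u ^ 2)⁻¹ : ℝ) : ℂ) := by
    rw [← Complex.ofReal_one, ← Complex.ofReal_sub]
    congr 1
    field_simp
    ring
  have h2 : |2 * u / (1 + u ^ 2) ^ 2| =
      2 * Real.exp (Real.log u - 2 * Real.log (1 + u ^ 2)) := by
    rw [abs_of_pos (by positivity), Real.exp_sub, Real.exp_log hu, two_mul (Real.log _),
      Real.exp_add, Real.exp_log hw]
    ring
  have h3 : (Real.sqrt (1 + u ^ 2))⁻¹ = Real.exp (-(Real.log (1 + u ^ 2) / 2)) := by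
    rw [Real.exp_neg, ← Real.log_sqrt hw.le, Real.exp_log (Real.sqrt_pos.2 hw)]
  rw [h1, h2, h3, aux_cpow (by positivity), aux_cpow (by positivity), aux_cpow hu,
    Real.log_div (by positivity) hw.ne', Real.log_inv, Real.log_pow, Complex.real_smul]
  push_cast
  rw [mul_assoc, ← Complex.exp_add, ← Complex.exp_add, ← Complex.exp_add]
  congr 2
  ring

lemma aux_deriv (u : ℝ) :
    HasDerivAt (fun u : ℝ => u ^ 2 / (1 + u ^ 2)) (2 * u / (1 + u ^ 2) ^ 2) u := by
  have hw : 1 + u ^ 2 ≠ 0 := by positivity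
  refine ((hasDerivAt_pow 2 u).div ((hasDerivAt_pow 2 u).const_add 1) hw).congr_deriv ?_
  congr 1
  push_cast
  ring

lemma aux_inj : Set.InjOn (fun u : ℝ => u ^ 2 / (1 + u ^ 2)) (Set.Ioi 0) := by
  intro a ha b hb h
  simp only [Set.mem_Ioi] at ha hb
  have h' : a ^ 2 / (1 + a ^ 2) = b ^ 2 / (1 + b ^ 2) := h
  rw [div_eq_div_iff (by positivity) (by positivity)] at h'
  have : a ^ 2 = b ^ 2 := by linarith
  exact (pow_left_inj₀ ha.le hb.le two_ne_zero).1 this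

lemma aux_image : (fun u : ℝ => u ^ 2 / (1 + u ^ 2)) '' (Set.Ioi 0) = Set.Ioo 0 1 := by
  ext x
  constructor
  · rintro ⟨u, hu, rfl⟩
    simp only [Set.mem_Ioi] at hu
    refine ⟨by positivity, ?_⟩
    show u ^ 2 / (1 + u ^ 2) < 1
    rw [div_lt_one (by positivity)]
    linarith
  · rintro ⟨h0, h1⟩
    have h2 : 0 < 1 - x := by linarith
    have h3 : 0 < x / (1 - x) := by positivity
    refine ⟨Real.sqrt (x / (1 - x)), Real.sqrt_pos.2 h3, ?_⟩
    show Real.sqrt (x / (1 - x)) ^ 2 / (1 + Real.sqrt (x / (1 - x)) ^ 2) = x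
    rw [Real.sq_sqrt h3.le]
    field_simp
    ring

lemma aux_beta (σ : ℂ) (hσ1 : 1 / 2 < σ.re) (hσ2 : σ.re < 1) :
    IntegrableOn (fun u : ℝ => (((Real.sqrt (1 + u ^ 2))⁻¹ : ℝ) : ℂ) * (u : ℂ) ^ (1 - 2 * σ))
      (Set.Ioi 0) ∧
    2 * ∫ u in Set.Ioi (0 : ℝ), (((Real.sqrt (1 + u ^ 2))⁻¹ : ℝ) : ℂ) * (u : ℂ) ^ (1 - 2 * σ) =
      Complex.betaIntegral (1 - σ) (σ - 1 / 2) := by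
  have hs : 0 < (1 - σ).re := by simp; linarith
  have ht : 0 < (σ - 1 / 2).re := by simp; linarith
  set g : ℝ → ℂ := fun x => (x : ℂ) ^ (1 - σ - 1) * (1 - (x : ℂ)) ^ (σ - 1 / 2 - 1) with hg
  have hconv := Complex.betaIntegral_convergent hs ht
  rw [intervalIntegrable_iff_integrableOn_Ioo_of_le zero_le_one] at hconv
  have key := integrableOn_image_iff_integrableOn_abs_deriv_smul measurableSet_Ioi
    (fun x _ => (aux_deriv x).hasDerivWithinAt) aux_inj g
  rw [aux_image] at key
  have hI := key.1 hconv
  have hpt : Set.EqOn (fun u : ℝ => |2 * u / (1 + u ^ 2) ^ 2| • g (u ^ 2 / (1 + u ^ 2)))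
      (fun u : ℝ => 2 * ((((Real.sqrt (1 + u ^ 2))⁻¹ : ℝ) : ℂ) * (u : ℂ) ^ (1 - 2 * σ)))
      (Set.Ioi 0) := fun u hu => aux_pt σ hu
  constructor
  · have h := (integrableOn_congr_fun hpt measurableSet_Ioi).1 hI
    have h' := h.const_mul (1 / 2 : ℂ)
    refine h'.congr (Eventually.of_forall fun x => ?_)
    ring
  · have e := integral_image_eq_integral_abs_deriv_smul measurableSet_Ioi
      (fun x _ => (aux_deriv x).hasDerivWithinAt) aux_inj g
    rw [aux_image, setIntegral_congr_fun measurableSet_Ioi hpt, integral_const_mul] at e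
    rw [← e, Complex.betaIntegral, intervalIntegral.integral_of_le zero_le_one,
      integral_Ioc_eq_integral_Ioo]

lemma aux_le {u : ℝ} (hu : 0 ≤ u) : Real.arsinh u ≤ u := by
  have h := Real.self_le_sinh_iff.2 (Real.arsinh_nonneg_iff.2 hu)
  rwa [Real.sinh_arsinh] at h

lemma aux_top {r : ℝ} (hr : 0 < r) :
    (fun u : ℝ => ((Real.arsinh u : ℝ) : ℂ)) =O[atTop] (fun u : ℝ => u ^ r) := by
  have h1 : (fun u : ℝ => ((Real.arsinh u : ℝ) : ℂ)) =O[atTop]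
      (fun u : ℝ => Real.log u) := by
    refine Asymptotics.IsBigO.of_bound 2 ?_
    filter_upwards [eventually_ge_atTop 3] with u hu
    have h0 : 0 ≤ Real.arsinh u := Real.arsinh_nonneg_iff.2 (by linarith)
    have hl : 0 ≤ Real.log u := Real.log_nonneg (by linarith)
    rw [Complex.norm_real, Real.norm_of_nonneg h0, Real.norm_of_nonneg hl]
    have : Real.sqrt (1 + u ^ 2) ≤ 2 * u := by
      rw [Real.sqrt_le_left (by linarith)]
      nlinarith
    calc Real.arsinh u = Real.log (u + Real.sqrt (1 + u ^ 2)) := rfl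
      _ ≤ Real.log (u ^ 2) := Real.log_le_log (by positivity) (by nlinarith)
      _ = 2 * Real.log u := by rw [Real.log_pow]; norm_num
  exact h1.trans (isLittleO_log_rpow_atTop hr).isBigO

lemma aux_bot : (fun u : ℝ => ((Real.arsinh u : ℝ) : ℂ)) =O[nhdsWithin 0 (Set.Ioi 0)]
    (fun u : ℝ => u ^ (-(-1 : ℝ))) := by
  refine Asymptotics.IsBigO.of_bound 1 ?_
  filter_upwards [self_mem_nhdsWithin] with u hu
  have hu' : (0 : ℝ) < u := hu
  rw [neg_neg, Real.rpow_one, Complex.norm_real,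
    Real.norm_of_nonneg (Real.arsinh_nonneg_iff.2 hu'.le), Real.norm_of_nonneg hu'.le, one_mul]
  exact aux_le hu'.le

lemma aux_norm {u : ℝ} (hu : 0 < u) (s : ℂ) : ‖(u : ℂ) ^ s‖ = u ^ s.re :=
  Complex.norm_cpow_eq_rpow_re_of_pos hu s

lemma aux_main (σ : ℂ) (hσ1 : 1 / 2 < σ.re) (hσ2 : σ.re < 1) :
    ∫ u in Set.Ioi (0 : ℝ), ((Real.arsinh u : ℝ) : ℂ) * (u : ℂ) ^ (-(2 * σ)) =
    (2 * σ - 1)⁻¹ * ∫ u in Set.Ioi (0 : ℝ),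
      (((Real.sqrt (1 + u ^ 2))⁻¹ : ℝ) : ℂ) * (u : ℂ) ^ (1 - 2 * σ) := by
  have hne : (1 - 2 * σ) ≠ 0 := by
    intro h
    have := congrArg Complex.re h
    simp at this
    linarith
  have hne' : (2 * σ - 1) ≠ 0 := by
    intro h
    exact hne (by linear_combination -h)
  have hre : (1 - 2 * σ).re = 1 - 2 * σ.re := by simp
  have hcont : Continuous (fun u : ℝ => ((Real.arsinh u : ℝ) : ℂ)) :=
    Complex.continuous_ofReal.comp Real.continuous_arsinh
  have hmel : MellinConvergent (fun u : ℝ => ((Real.arsinh u : ℝ) : ℂ)) (1 - 2 * σ) := by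
    refine mellinConvergent_of_isBigO_rpow (a := (1 - 2 * σ.re) / 2) (b := -1)
      (hcont.locallyIntegrable.locallyIntegrableOn _) (aux_top (by linarith)) ?_ aux_bot ?_
    · rw [hre]; linarith
    · rw [hre]; linarith
  have hbd0 : Tendsto ((fun u : ℝ => ((Real.arsinh u : ℝ) : ℂ)) *
      (fun u : ℝ => (u : ℂ) ^ (1 - 2 * σ) / (1 - 2 * σ))) (nhdsWithin 0 (Set.Ioi 0))
      (nhds 0) := by
    have hO : ((fun u : ℝ => ((Real.arsinh u : ℝ) : ℂ)) *
      (fun u : ℝ => (u : ℂ) ^ (1 - 2 * σ) / (1 - 2 * σ))) =O[nhdsWithin 0 (Set.Ioi 0)]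
      (fun u : ℝ => u ^ (2 - 2 * σ.re)) := by
      have hB : (fun u : ℝ => (u : ℂ) ^ (1 - 2 * σ) / (1 - 2 * σ)) =O[nhdsWithin 0 (Set.Ioi 0)]
          (fun u : ℝ => u ^ (1 - 2 * σ.re)) := by
        refine Asymptotics.IsBigO.of_bound (‖(1 - 2 * σ)‖⁻¹) ?_
        filter_upwards [self_mem_nhdsWithin] with u hu
        have hu' : (0 : ℝ) < u := hu
        rw [norm_div, aux_norm hu', hre, Real.norm_of_nonneg (by positivity), div_eq_inv_mul]
      refine (aux_bot.mul hB).congr' EventuallyEq.rfl ?_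
      filter_upwards [self_mem_nhdsWithin] with u hu
      rw [← Real.rpow_add hu]
      congr 1
      ring
    refine hO.trans_tendsto ?_
    have := (Real.continuousAt_rpow_const 0 (2 - 2 * σ.re) (Or.inr (by linarith))).tendsto
    rw [Real.zero_rpow (by linarith)] at this
    exact this.mono_left nhdsWithin_le_nhds
  have hbdt : Tendsto ((fun u : ℝ => ((Real.arsinh u : ℝ) : ℂ)) *
      (fun u : ℝ => (u : ℂ) ^ (1 - 2 * σ) / (1 - 2 * σ))) atTop (nhds 0) := by
    have hO : ((fun u : ℝ => ((Real.arsinh u : ℝ) : ℂ)) *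
      (fun u : ℝ => (u : ℂ) ^ (1 - 2 * σ) / (1 - 2 * σ))) =O[atTop]
      (fun u : ℝ => u ^ (-(σ.re - 1 / 2))) := by
      have hB : (fun u : ℝ => (u : ℂ) ^ (1 - 2 * σ) / (1 - 2 * σ)) =O[atTop]
          (fun u : ℝ => u ^ (1 - 2 * σ.re)) := by
        refine Asymptotics.IsBigO.of_bound (‖(1 - 2 * σ)‖⁻¹) ?_
        filter_upwards [eventually_gt_atTop 0] with u hu'
        rw [norm_div, aux_norm hu', hre, Real.norm_of_nonneg (by positivity), div_eq_inv_mul]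
      have hr : 0 < σ.re - 1 / 2 := by linarith
      refine ((aux_top hr).mul hB).congr' EventuallyEq.rfl ?_
      filter_upwards [eventually_gt_atTop 0] with u hu
      rw [← Real.rpow_add hu]
      congr 1
      ring
    exact hO.trans_tendsto (tendsto_rpow_neg_atTop (by linarith))
  have hv : ∀ x ∈ Set.Ioi (0 : ℝ), HasDerivAt
      (fun u : ℝ => (u : ℂ) ^ (1 - 2 * σ) / (1 - 2 * σ)) ((x : ℂ) ^ (-(2 * σ))) x := by
    intro x hx
    have hx' : (0 : ℝ) < x := hx
    have := hasDerivAt_ofReal_cpow_const' hx'.ne' (r := -(2 * σ))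
      (by intro h; exact hne (by linear_combination h))
    rwa [show -(2 * σ) + 1 = 1 - 2 * σ by ring] at this
  have hu : ∀ x ∈ Set.Ioi (0 : ℝ), HasDerivAt
      (fun u : ℝ => ((Real.arsinh u : ℝ) : ℂ)) (((Real.sqrt (1 + x ^ 2))⁻¹ : ℝ) : ℂ) x :=
    fun x _ => (Real.hasDerivAt_arsinh x).ofReal_comp
  have hpt : ∀ u : ℝ, (((Real.sqrt (1 + u ^ 2))⁻¹ : ℝ) : ℂ) *
      ((u : ℂ) ^ (1 - 2 * σ) / (1 - 2 * σ)) = (1 - 2 * σ)⁻¹ *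
      ((((Real.sqrt (1 + u ^ 2))⁻¹ : ℝ) : ℂ) * (u : ℂ) ^ (1 - 2 * σ)) := by
    intro u
    ring
  rw [integral_Ioi_mul_deriv_eq_deriv_mul (a' := 0) (b' := 0) hu hv ?_ ?_ hbd0 hbdt]
  · simp_rw [hpt]
    rw [integral_const_mul, show (1 - 2 * σ) = -(2 * σ - 1) by ring, inv_neg]
    ring
  · refine hmel.congr (Eventually.of_forall fun x => ?_)
    simp only [smul_eq_mul, Pi.mul_apply]
    rw [show 1 - 2 * σ - 1 = -(2 * σ) by ring, mul_comm]
  · refine ((aux_beta σ hσ1 hσ2).1.const_mul ((1 - 2 * σ)⁻¹)).congr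
      (Eventually.of_forall fun x => ?_)
    exact (hpt x).symm

/-- for every real `β > 0` and every `σ ∈ ℂ` with `1/2 < Re(σ) < 1`,
`∫₀^∞ u^{-2σ}·arsinh(u/β) du = β^{1-2σ}·Γ(1-σ)·Γ(σ - 1/2)/(2(2σ-1)·√π)`. -/
theorem statement15 (β : ℝ) (hβ : 0 < β) (σ : ℂ) (hσ1 : 1 / 2 < σ.re) (hσ2 : σ.re < 1) :
    ∫ u in Set.Ioi (0 : ℝ),
        (u : ℂ) ^ (-(2 * σ)) * ((Real.arsinh (u / β) : ℝ) : ℂ) =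
      ((β : ℝ) : ℂ) ^ (1 - 2 * σ) * Complex.Gamma (1 - σ) * Complex.Gamma (σ - 1 / 2) /
        (2 * (2 * σ - 1) * ((Real.sqrt Real.pi : ℝ) : ℂ)) := by
  have hs : 0 < (1 - σ).re := by simp; linarith
  have ht : 0 < (σ - 1 / 2).re := by simp; linarith
  have hm := mellin_comp_mul_right (fun u : ℝ => ((Real.arsinh u : ℝ) : ℂ)) (1 - 2 * σ)
    (inv_pos.2 hβ)
  have hpow : ((β⁻¹ : ℝ) : ℂ) ^ (-(1 - 2 * σ)) = (β : ℂ) ^ (1 - 2 * σ) := by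
    rw [aux_cpow (inv_pos.2 hβ), aux_cpow hβ, Real.log_inv]
    congr 1
    push_cast
    ring
  have hG := Complex.Gamma_mul_Gamma_eq_betaIntegral hs ht
  have hhalf : Complex.Gamma (1 - σ + (σ - 1 / 2)) = ((Real.sqrt Real.pi : ℝ) : ℂ) := by
    rw [← Real.Gamma_one_half_eq, ← Complex.Gamma_ofReal]
    congr 1
    push_cast
    ring
  have hpi : ((Real.sqrt Real.pi : ℝ) : ℂ) ≠ 0 := by
    exact_mod_cast (Real.sqrt_pos.2 Real.pi_pos).ne'
  have hne' : (2 * σ - 1) ≠ 0 := by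
    intro h
    have := congrArg Complex.re h
    simp at this
    linarith
  have hmain := aux_main σ hσ1 hσ2
  have hbeta := (aux_beta σ hσ1 hσ2).2
  rw [hhalf, ← hbeta] at hG
  rw [hpow] at hm
  simp only [mellin, smul_eq_mul, show 1 - 2 * σ - 1 = -(2 * σ) by ring, ← div_eq_mul_inv] at hm
  rw [hm]
  simp_rw [mul_comm ((_ : ℂ) ^ (-(2 * σ)))]
  rw [hmain, mul_assoc _ (Complex.Gamma _), hG]
  field_simp
end
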